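/- arXiv:1202.0973 — 3 statements merged into one kernel-verified Lean document; each statement's English description precedes it below -/
import Mathlib

section
/- Let u be homogeneous of degree zero on ℝ^{3}_+ with E_R(u) = ∫_{B_R^+} |∇u|² x_3^a dX finite, a = 1 - s ∈ (0,1), and let u_R^± be the horizontal domain perturbations u_R^±(X + ± φ(X/R)e_1) = u(X) for a fixed cutoff φ. Then there exists C ≥ 0 (depending on φ and u) such that E_R(u_R^+) + E_R(u_R^-) - 2E_R(u) ≤ C R^{-s} for all sufficiently large R. -/
open MeasureTheory

/-- Horizontal perturbation map `Y(X) = X + σ φ(X/R) e₁`. -/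
noncomputable def pertMap (n : ℕ) (φ : EuclideanSpace ℝ (Fin (n + 1)) → ℝ) (σ R : ℝ)
    (X : EuclideanSpace ℝ (Fin (n + 1))) : EuclideanSpace ℝ (Fin (n + 1)) :=
  X + (σ * φ (R⁻¹ • X)) • (EuclideanSpace.single 0 1 : EuclideanSpace ℝ (Fin (n + 1)))

/-- The perturbed function `u_R^σ`, defined by `u_R^σ(Y(X)) = u(X)`. -/
noncomputable def pertFun (n : ℕ) (φ : EuclideanSpace ℝ (Fin (n + 1)) → ℝ) (σ R : ℝ)
    (u : EuclideanSpace ℝ (Fin (n + 1)) → ℝ) : EuclideanSpace ℝ (Fin (n + 1)) → ℝ :=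
  u ∘ Function.invFun (pertMap n φ σ R)

/-- The weighted Dirichlet energy `E_R(v) = ∫_{B_R^+} |∇v|² x_{n+1}^a dX`. -/
noncomputable def wEnergy (n : ℕ) (a : ℝ) (v : EuclideanSpace ℝ (Fin (n + 1)) → ℝ) (R : ℝ) :
    ENNReal :=
  ∫⁻ X in {X : EuclideanSpace ℝ (Fin (n + 1)) | ‖X‖ < R ∧ 0 < X (Fin.last n)},
    ENNReal.ofReal (‖gradient v X‖ ^ 2 * (X (Fin.last n)) ^ a)

/-!
A horizontal shear `Y = X + ψ(X) e` has Jacobian `1 + ∂ₑψ`, and `v = u ∘ Y⁻¹` satisfies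
`∇v(Y) = ∇u - (∂ₑu / (1 + ∂ₑψ)) ∇ψ`. Changing variables, the energy of `v` becomes an integral in
`X` whose density, as a function of `ψ`, has the linear part `∂ₑψ |∇u|² - 2 ∂ₑu ⟨∇u, ∇ψ⟩`. It
cancels when the densities of `ψ` and `-ψ` are added, so a shear with `|∇ψ| ≤ M / R` costs only a
factor `1 + O(R⁻²)`. Homogeneity makes the energy in the half-ball of radius `R` a multiple of
`R ^ (n - 1 + a)`, and the defect is `O(R ^ (n - 3 + a))`.
-/

section Preliminaries

lemma image_eq_of_eqOn_compl_id {α : Type*} {f : α → α} {S : Set α} (hf : f.Bijective)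
    (hS : Set.EqOn f id Sᶜ) : f '' S = S := by
  rw [← compl_inj_iff, ← Set.image_compl_eq hf, hS.image_eq, Set.image_id]

section NormedSpace

open scoped Pointwise

variable {E : Type*} [NormedAddCommGroup E] [NormedSpace ℝ E]

lemma lintegral_smul_set [FiniteDimensional ℝ E] [MeasurableSpace E] [BorelSpace E]
    {μ : Measure E} [μ.IsAddHaarMeasure] {S : Set E} (hS : MeasurableSet S) {r : ℝ} (hr : 0 < r)
    (f : E → ENNReal) :
    ∫⁻ X in r • S, f X ∂μ
      = ENNReal.ofReal (r ^ Module.finrank ℝ E) * ∫⁻ X in S, f (r • X) ∂μ := by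
  have hderiv : ∀ X ∈ S, HasFDerivWithinAt (r • · : E → E) (r • ContinuousLinearMap.id ℝ E) S X :=
    fun X _ => ((hasFDerivAt_id X).const_smul r).hasFDerivWithinAt
  rw [← Set.image_smul, lintegral_image_eq_lintegral_abs_det_fderiv_mul μ hS hderiv
    (smul_right_injective E hr.ne').injOn, ← lintegral_const_mul' _ _ ENNReal.ofReal_ne_top]
  simp [ContinuousLinearMap.det, abs_of_pos hr]

lemma isHomeomorph_id_add_of_lipschitzWith [CompleteSpace E] {f : E → E} {K : NNReal}
    (hf : LipschitzWith K f) (hK : K < 1) : IsHomeomorph fun X => X + f X := by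
  have happrox : ApproximatesLinearOn (fun X => X + f X)
      (ContinuousLinearEquiv.refl ℝ E : E →L[ℝ] E) Set.univ K := fun x _ y _ => by
    simpa [add_sub_add_comm] using hf.norm_sub_le x y
  refine (happrox.toHomeomorph _ ?_).isHomeomorph
  rcases subsingleton_or_nontrivial E with hE | hE
  · exact .inl hE
  · exact .inr (by simpa using hK)

/-- The displacement `X ↦ X + ψ(X) e` in the direction `e`, by the amount `ψ`. -/
def shear (ψ : E → ℝ) (e : E) (X : E) : E :=
  X + ψ X • e

lemma isHomeomorph_shear [CompleteSpace E] {ψ : E → ℝ} {e : E} {K : NNReal} (he : ‖e‖ ≤ 1)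
    (hψ : LipschitzWith K ψ) (hK : K < 1) : IsHomeomorph (shear ψ e) := by
  refine isHomeomorph_id_add_of_lipschitzWith (f := fun X => ψ X • e)
    (LipschitzWith.of_dist_le_mul fun x y => ?_) hK
  calc dist (ψ x • e) (ψ y • e) = dist (ψ x) (ψ y) * ‖e‖ := by
        rw [dist_eq_norm, dist_eq_norm, ← sub_smul, norm_smul]
    _ ≤ dist (ψ x) (ψ y) := mul_le_of_le_one_right dist_nonneg he
    _ ≤ K * dist x y := hψ.dist_le_mul x y

end NormedSpace

lemma continuous_invFun_of_isHomeomorph {X Y : Type*} [TopologicalSpace X] [TopologicalSpace Y]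
    [Nonempty X] {f : X → Y} (hf : IsHomeomorph f) : Continuous (Function.invFun f) := by
  obtain ⟨-, g, -, hright, hg⟩ := isHomeomorph_iff_exists_inverse.1 hf
  rwa [Function.invFun_eq_of_injective_of_rightInverse hf.injective hright]

variable {E : Type*} [NormedAddCommGroup E] [InnerProductSpace ℝ E] [CompleteSpace E]

lemma norm_gradient_le_of_lipschitzWith {f : E → ℝ} {K : NNReal} (hf : LipschitzWith K f) (X : E) :
    ‖gradient f X‖ ≤ K := by
  simpa only [gradient, LinearIsometryEquiv.norm_map] using norm_fderiv_le_of_lipschitz ℝ hf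

lemma gradient_comp_smul (f : E → ℝ) (r : ℝ) (X : E) :
    gradient (fun Y => f (r • Y)) X = r • gradient f (r • X) := by
  simp [gradient, fderiv_comp_smul]

lemma measurable_gradient [MeasurableSpace E] [BorelSpace E] (f : E → ℝ) :
    Measurable (gradient f) :=
  (InnerProductSpace.toDual ℝ E).symm.continuous.measurable.comp (measurable_fderiv ℝ f)

end Preliminaries

section ShearDensity

open scoped RealInnerProductSpace

variable {E : Type*} [NormedAddCommGroup E] [InnerProductSpace ℝ E] {e g p : E}

/-- The density `|∇v(Y)|² det DY` of the Dirichlet energy of `v = u ∘ Y⁻¹`, pulled back along the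
shear `Y = X + ψ(X) e`, in terms of `g = ∇u` and `p = ∇ψ`. It is meaningful for `⟪p, e⟫ ≠ -1`. -/
noncomputable def shearDensity (e g p : E) : ℝ :=
  (1 + ⟪p, e⟫) * ‖g - (⟪g, e⟫ / (1 + ⟪p, e⟫)) • p‖ ^ 2

lemma shearDensity_nonneg (hq : 0 ≤ 1 + ⟪p, e⟫) : 0 ≤ shearDensity e g p :=
  mul_nonneg hq (sq_nonneg _)

lemma shearDensity_eq (hq : 1 + ⟪p, e⟫ ≠ 0) :
    shearDensity e g p = (1 + ⟪p, e⟫) * ‖g‖ ^ 2 - 2 * ⟪g, e⟫ * ⟪g, p⟫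
      + ⟪g, e⟫ ^ 2 * ‖p‖ ^ 2 / (1 + ⟪p, e⟫) := by
  rw [shearDensity, norm_sub_sq_real, inner_smul_right, norm_smul, mul_pow, Real.norm_eq_abs,
    sq_abs]
  field_simp

lemma shearDensity_add_shearDensity_neg (hq : 1 + ⟪p, e⟫ ≠ 0) (hq' : 1 - ⟪p, e⟫ ≠ 0) :
    shearDensity e g p + shearDensity e g (-p)
      = 2 * ‖g‖ ^ 2 + 2 * (⟪g, e⟫ ^ 2 * ‖p‖ ^ 2) / (1 - ⟪p, e⟫ ^ 2) := by
  have hfactor : 1 - ⟪p, e⟫ ^ 2 = (1 + ⟪p, e⟫) * (1 - ⟪p, e⟫) := by ring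
  rw [shearDensity_eq hq, shearDensity_eq (by rwa [inner_neg_left, ← sub_eq_add_neg]),
    inner_neg_left, inner_neg_right, norm_neg, ← sub_eq_add_neg, hfactor]
  field_simp
  ring

lemma abs_inner_le_of_norm_le_one (he : ‖e‖ ≤ 1) (X : E) : |⟪X, e⟫| ≤ ‖X‖ :=
  (abs_real_inner_le_norm X e).trans (mul_le_of_le_one_right (norm_nonneg X) he)

lemma one_add_inner_pos (he : ‖e‖ ≤ 1) (hp : ‖p‖ < 1) : 0 < 1 + ⟪p, e⟫ := by
  linarith [neg_abs_le ⟪p, e⟫, abs_inner_le_of_norm_le_one he p]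

lemma shearDensity_add_shearDensity_neg_le {m : ℝ} (he : ‖e‖ ≤ 1) (hp : ‖p‖ ≤ m) (hm : m < 1) :
    shearDensity e g p + shearDensity e g (-p) ≤ 2 / (1 - m ^ 2) * ‖g‖ ^ 2 := by
  have hpos : 0 < 1 + ⟪p, e⟫ := one_add_inner_pos he (hp.trans_lt hm)
  have hneg : 0 < 1 - ⟪p, e⟫ := by
    simpa [sub_eq_add_neg] using one_add_inner_pos (p := -p) he (by simpa using hp.trans_lt hm)
  have hpm : ‖p‖ ^ 2 ≤ m ^ 2 := by gcongr
  have hqm : ⟪p, e⟫ ^ 2 ≤ m ^ 2 := sq_le_sq' (by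
    linarith [neg_abs_le ⟪p, e⟫, abs_inner_le_of_norm_le_one he p])
    ((le_abs_self _).trans ((abs_inner_le_of_norm_le_one he p).trans hp))
  have hge : ⟪g, e⟫ ^ 2 ≤ ‖g‖ ^ 2 := sq_le_sq.2 (by
    simpa using abs_inner_le_of_norm_le_one he g)
  have hm1 : 0 < 1 - m ^ 2 := by nlinarith [norm_nonneg p]
  calc shearDensity e g p + shearDensity e g (-p)
      = 2 * ‖g‖ ^ 2 + 2 * (⟪g, e⟫ ^ 2 * ‖p‖ ^ 2) / (1 - ⟪p, e⟫ ^ 2) :=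
        shearDensity_add_shearDensity_neg hpos.ne' hneg.ne'
    _ ≤ 2 * ‖g‖ ^ 2 + 2 * (‖g‖ ^ 2 * m ^ 2) / (1 - m ^ 2) := by gcongr
    _ = 2 / (1 - m ^ 2) * ‖g‖ ^ 2 := by
        field_simp
        ring

lemma measurable_shearDensity {α : Type*} [MeasurableSpace α] [MeasurableSpace E] [BorelSpace E]
    [SecondCountableTopology E] {G P : α → E} (hG : Measurable G) (hP : Measurable P) :
    Measurable fun x => shearDensity e (G x) (P x) := by
  unfold shearDensity
  fun_prop

end ShearDensity

section Shear

open scoped RealInnerProductSpace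

variable {E : Type*} [NormedAddCommGroup E] [InnerProductSpace ℝ E] {ψ u : E → ℝ}
  {e g p X : E}

/-- The linear map `v ↦ v + ⟪p, v⟫ e`, which is the derivative of `shear ψ e` when `p = ∇ψ`. -/
noncomputable def shearFDeriv (e p : E) : E →L[ℝ] E :=
  ContinuousLinearMap.id ℝ E + (innerSL ℝ p).smulRight e

lemma shearFDeriv_apply (e p v : E) : shearFDeriv e p v = v + ⟪p, v⟫ • e := by
  simp [shearFDeriv]

lemma det_shearFDeriv [FiniteDimensional ℝ E] (e p : E) :
    (shearFDeriv e p).det = 1 + ⟪p, e⟫ :=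
  LinearMap.transvection.det (innerSL ℝ p).toLinearMap e

lemma leftInverse_shearFDeriv (hq : 1 + ⟪p, e⟫ ≠ 0) :
    Function.LeftInverse (shearFDeriv e (-(1 + ⟪p, e⟫)⁻¹ • p)) (shearFDeriv e p) := fun v => by
  simp only [shearFDeriv_apply, inner_smul_left, inner_add_right, inner_smul_right, conj_trivial]
  rw [add_assoc, ← add_smul, add_eq_left]
  convert! zero_smul ℝ e
  field_simp
  ring

variable [CompleteSpace E]

lemma hasFDerivAt_shear (hψ : HasGradientAt ψ p X) :
    HasFDerivAt (shear ψ e) (shearFDeriv e p) X :=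
  (hasFDerivAt_id X).add (hψ.hasFDerivAt.smul_const e)

lemma hasGradientAt_comp_invFun_shear (hY : IsHomeomorph (shear ψ e)) (hq : 1 + ⟪p, e⟫ ≠ 0)
    (hψ : HasGradientAt ψ p X) (hu : HasGradientAt u g X) :
    HasGradientAt (u ∘ Function.invFun (shear ψ e)) (g - (⟪g, e⟫ / (1 + ⟪p, e⟫)) • p)
      (shear ψ e X) := by
  have hleft : Function.invFun (shear ψ e) (shear ψ e X) = X :=
    Function.leftInverse_invFun hY.injective X
  have hright : shear ψ e ∘ Function.invFun (shear ψ e) = id :=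
    (Function.rightInverse_invFun hY.surjective).id
  have hinv : HasFDerivAt (Function.invFun (shear ψ e)) (shearFDeriv e (-(1 + ⟪p, e⟫)⁻¹ • p))
      (shear ψ e X) :=
    HasFDerivAt.of_comp_of_leftInverse (continuous_invFun_of_isHomeomorph hY).continuousAt
      (by rw [hleft]; exact hasFDerivAt_shear hψ) (hasFDerivAt_id _) (.of_eq hright)
      (leftInverse_shearFDeriv hq)
  have hu' : HasFDerivAt u (InnerProductSpace.toDual ℝ E g)
      (Function.invFun (shear ψ e) (shear ψ e X)) := by
    rw [hleft]
    exact hu.hasFDerivAt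
  refine (hu'.comp _ hinv).congr_fderiv (ContinuousLinearMap.ext fun v => ?_)
  simp only [ContinuousLinearMap.comp_apply, shearFDeriv_apply,
    InnerProductSpace.toDual_apply_apply, inner_add_right, inner_sub_left, inner_smul_left,
    inner_smul_right, conj_trivial]
  ring

end Shear

section WeightedEnergy

open scoped RealInnerProductSpace Pointwise

variable {E : Type*} [NormedAddCommGroup E] [InnerProductSpace ℝ E] [FiniteDimensional ℝ E]
  [MeasurableSpace E] [BorelSpace E] {μ : Measure E} [μ.IsAddHaarMeasure]
  {w ψ u : E → ℝ} {S : Set E} {e : E} {K : NNReal}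

/-- The weighted Dirichlet energy `∫_S |∇u|² w dμ`. -/
noncomputable def weightedEnergy (μ : Measure E) (w : E → ℝ) (S : Set E) (u : E → ℝ) : ENNReal :=
  ∫⁻ X in S, ENNReal.ofReal (‖gradient u X‖ ^ 2 * w X) ∂μ

lemma weightedEnergy_comp_invFun_shear (he : ‖e‖ ≤ 1) (hψ : Differentiable ℝ ψ)
    (hψK : LipschitzWith K ψ) (hK : K < 1) (hS : MeasurableSet S)
    (hu : ∀ X ∈ S, DifferentiableAt ℝ u X) (hw : ∀ X, w (shear ψ e X) = w X)
    (hYS : shear ψ e '' S = S) :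
    weightedEnergy μ w S (u ∘ Function.invFun (shear ψ e))
      = ∫⁻ X in S, ENNReal.ofReal (shearDensity e (gradient u X) (gradient ψ X) * w X) ∂μ := by
  have hY : IsHomeomorph (shear ψ e) := isHomeomorph_shear he hψK hK
  have hψ' : ∀ X, HasGradientAt ψ (gradient ψ X) X := fun X => (hψ X).hasGradientAt
  unfold weightedEnergy
  conv_lhs => rw [← hYS]
  rw [lintegral_image_eq_lintegral_abs_det_fderiv_mul μ hS
    (fun X _ => (hasFDerivAt_shear (hψ' X)).hasFDerivWithinAt) hY.injective.injOn]
  refine setLIntegral_congr_fun hS fun X hX => ?_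
  have hq : 0 < 1 + ⟪gradient ψ X, e⟫ :=
    one_add_inner_pos he ((norm_gradient_le_of_lipschitzWith hψK X).trans_lt hK)
  have hv := hasGradientAt_comp_invFun_shear hY hq.ne' (hψ' X) (hu X hX).hasGradientAt
  simp only [det_shearFDeriv, abs_of_pos hq, hv.gradient, hw]
  rw [← ENNReal.ofReal_mul hq.le, ← mul_assoc, shearDensity]

lemma weightedEnergy_shear_add_shear_neg_le (he : ‖e‖ ≤ 1) (hψ : Differentiable ℝ ψ)
    (hψK : LipschitzWith K ψ) (hK : K < 1) (hS : MeasurableSet S)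
    (hu : ∀ X ∈ S, DifferentiableAt ℝ u X) (hwm : Measurable w) (hw0 : ∀ X ∈ S, 0 ≤ w X)
    (hw : ∀ X (t : ℝ), w (X + t • e) = w X) (hYS : shear ψ e '' S = S)
    (hYS' : shear (-ψ) e '' S = S) :
    weightedEnergy μ w S (u ∘ Function.invFun (shear ψ e))
        + weightedEnergy μ w S (u ∘ Function.invFun (shear (-ψ) e))
      ≤ ENNReal.ofReal (2 / (1 - (K : ℝ) ^ 2)) * weightedEnergy μ w S u := by
  have hgrad : ∀ X, gradient (-ψ) X = -gradient ψ X := fun X => by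
    simp [gradient, fderiv_neg]
  have hψK' : ∀ X, ‖gradient ψ X‖ ≤ K := norm_gradient_le_of_lipschitzWith hψK
  have hpos : ∀ X, 0 ≤ shearDensity e (gradient u X) (gradient ψ X) := fun X =>
    shearDensity_nonneg (one_add_inner_pos he ((hψK' X).trans_lt hK)).le
  have hneg : ∀ X, 0 ≤ shearDensity e (gradient u X) (-gradient ψ X) := fun X =>
    shearDensity_nonneg (one_add_inner_pos he (by simpa using (hψK' X).trans_lt hK)).le
  have hK2 : 0 ≤ 2 / (1 - (K : ℝ) ^ 2) :=
    div_nonneg zero_le_two (sub_nonneg.2 (pow_le_one₀ K.coe_nonneg hK.le))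
  have hmeas : Measurable fun X =>
      ENNReal.ofReal (shearDensity e (gradient u X) (gradient ψ X) * w X) :=
    ((measurable_shearDensity (measurable_gradient u) (measurable_gradient ψ)).mul
      hwm).ennreal_ofReal
  rw [weightedEnergy_comp_invFun_shear he hψ hψK hK hS hu (fun X => hw X _) hYS,
    weightedEnergy_comp_invFun_shear he hψ.neg hψK.neg hK hS hu (fun X => hw X _) hYS',
    ← lintegral_add_left hmeas, weightedEnergy, ← lintegral_const_mul' _ _ ENNReal.ofReal_ne_top]
  refine setLIntegral_mono' hS fun X hX => ?_
  rw [hgrad, ← ENNReal.ofReal_add (mul_nonneg (hpos X) (hw0 X hX))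
    (mul_nonneg (hneg X) (hw0 X hX)), ← ENNReal.ofReal_mul hK2, ← add_mul, ← mul_assoc]
  exact ENNReal.ofReal_le_ofReal (mul_le_mul_of_nonneg_right
    (shearDensity_add_shearDensity_neg_le he (hψK' X) hK) (hw0 X hX))

lemma weightedEnergy_smul_set {a r : ℝ} (hS : IsOpen S) (hr : 0 < r)
    (hw : ∀ X ∈ S, w (r • X) = r ^ a * w X) (hu : ∀ X ∈ S, u (r • X) = u X) :
    weightedEnergy μ w (r • S) u
      = ENNReal.ofReal (r ^ ((Module.finrank ℝ E : ℝ) - 2 + a)) * weightedEnergy μ w S u := by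
  have hgrad : ∀ X ∈ S, gradient u (r • X) = r⁻¹ • gradient u X := fun X hX => by
    have hloc : (fun Y => u (r • Y)) =ᶠ[nhds X] u := (hS.eventually_mem hX).mono hu
    rw [← hloc.gradient_eq, gradient_comp_smul, inv_smul_smul₀ hr.ne']
  have hpow : r ^ ((Module.finrank ℝ E : ℝ) - 2 + a)
      = r ^ Module.finrank ℝ E * (r⁻¹ ^ 2 * r ^ a) := by
    rw [Real.rpow_add hr, Real.rpow_sub hr, Real.rpow_natCast, Real.rpow_two]
    field_simp
  rw [weightedEnergy, lintegral_smul_set hS.measurableSet hr, hpow,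
    ENNReal.ofReal_mul (by positivity), mul_assoc, weightedEnergy,
    ← lintegral_const_mul' (ENNReal.ofReal (_ * _)) _ ENNReal.ofReal_ne_top]
  congr 1
  refine setLIntegral_congr_fun hS.measurableSet fun X hX => ?_
  rw [← ENNReal.ofReal_mul (by positivity), hgrad X hX, hw X hX, norm_smul, mul_pow,
    Real.norm_eq_abs, sq_abs]
  ring_nf

end WeightedEnergy

section UpperHalfBall

open scoped Pointwise

variable {n : ℕ} {a R : ℝ} {φ u : EuclideanSpace ℝ (Fin (n + 1)) → ℝ} {M : NNReal}

/-- The open upper half-ball `B_R^+` of `ℝ^(n+1)`, the domain of integration of `wEnergy`. -/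
def upperHalfBall (n : ℕ) (R : ℝ) : Set (EuclideanSpace ℝ (Fin (n + 1))) :=
  {X | ‖X‖ < R ∧ 0 < X (Fin.last n)}

lemma wEnergy_eq_weightedEnergy (n : ℕ) (a : ℝ) (v : EuclideanSpace ℝ (Fin (n + 1)) → ℝ) (R : ℝ) :
    wEnergy n a v R
      = weightedEnergy volume (fun X => X (Fin.last n) ^ a) (upperHalfBall n R) v :=
  rfl

lemma isOpen_upperHalfBall (n : ℕ) (R : ℝ) : IsOpen (upperHalfBall n R) :=
  (isOpen_lt continuous_norm continuous_const).inter
    (isOpen_lt continuous_const (EuclideanSpace.proj (𝕜 := ℝ) (Fin.last n)).continuous)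

lemma smul_upperHalfBall_one (n : ℕ) (hR : 0 < R) : R • upperHalfBall n 1 = upperHalfBall n R := by
  ext X
  rw [Set.mem_smul_set_iff_inv_smul_mem₀ hR.ne']
  simp [upperHalfBall, norm_smul, abs_of_pos hR, inv_mul_lt_iff₀ hR, hR]

lemma wEnergy_eq_rpow_mul (hR : 0 < R)
    (hhom : ∀ X, 0 < X (Fin.last n) → ∀ t : ℝ, 0 < t → u (t • X) = u X) :
    wEnergy n a u R = ENNReal.ofReal (R ^ ((n : ℝ) - 1 + a)) * wEnergy n a u 1 := by
  rw [wEnergy_eq_weightedEnergy, ← smul_upperHalfBall_one n hR,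
    weightedEnergy_smul_set (isOpen_upperHalfBall n 1) hR
      (fun X hX => Real.mul_rpow hR.le hX.2.le) fun X hX => hhom X hX.2 R hR,
    finrank_euclideanSpace_fin, ← wEnergy_eq_weightedEnergy]
  push_cast
  ring_nf

lemma pertMap_eq_shear (n : ℕ) (φ : EuclideanSpace ℝ (Fin (n + 1)) → ℝ) (σ R : ℝ) :
    pertMap n φ σ R = shear (fun X => σ * φ (R⁻¹ • X)) (EuclideanSpace.single 0 1) :=
  rfl

lemma last_add_smul_single_zero [NeZero n] (X : EuclideanSpace ℝ (Fin (n + 1))) (t : ℝ) :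
    (X + t • (EuclideanSpace.single 0 1 : EuclideanSpace ℝ (Fin (n + 1)))) (Fin.last n)
      = X (Fin.last n) := by
  simp [Fin.last_pos'.ne']

lemma shear_image_upperHalfBall [NeZero n] {ψ : EuclideanSpace ℝ (Fin (n + 1)) → ℝ}
    (hY : (shear ψ (EuclideanSpace.single 0 1)).Bijective) (hψ : ∀ X, R ≤ ‖X‖ → ψ X = 0) :
    shear ψ (EuclideanSpace.single 0 1) '' upperHalfBall n R = upperHalfBall n R := by
  have hball : shear ψ (EuclideanSpace.single 0 1) '' {X | ‖X‖ < R} = {X | ‖X‖ < R} :=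
    image_eq_of_eqOn_compl_id hY fun X hX => by simp [shear, hψ X (not_lt.1 hX)]
  have hhalf : shear ψ (EuclideanSpace.single 0 1) ⁻¹' {X | 0 < X (Fin.last n)}
      = {X | 0 < X (Fin.last n)} :=
    Set.ext fun X => by simp only [Set.mem_preimage, Set.mem_ofPred_eq, shear,
      last_add_smul_single_zero]
  calc shear ψ (EuclideanSpace.single 0 1) '' upperHalfBall n R
      = shear ψ (EuclideanSpace.single 0 1) '' ({X | ‖X‖ < R} ∩
          shear ψ (EuclideanSpace.single 0 1) ⁻¹' {X | 0 < X (Fin.last n)}) := by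
        rw [hhalf]
        rfl
    _ = {X | ‖X‖ < R} ∩ {X | 0 < X (Fin.last n)} := by rw [Set.image_inter_preimage, hball]

lemma wEnergy_pertFun_add_le [NeZero n] (hφ : Differentiable ℝ φ) (hφM : LipschitzWith M φ)
    (hφ0 : ∀ x, 1 ≤ ‖x‖ → φ x = 0) (hu : ∀ X, 0 < X (Fin.last n) → DifferentiableAt ℝ u X)
    (hR : M < R) :
    wEnergy n a (pertFun n φ 1 R u) R + wEnergy n a (pertFun n φ (-1) R u) R
      ≤ ENNReal.ofReal (2 / (1 - (M / R) ^ 2)) * wEnergy n a u R := by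
  have hR0 : 0 < R := M.coe_nonneg.trans_lt hR
  set ψ : EuclideanSpace ℝ (Fin (n + 1)) → ℝ := fun X => φ (R⁻¹ • X) with hψ_def
  have hψ : Differentiable ℝ ψ := hφ.comp (differentiable_id.const_smul R⁻¹)
  have hψ0 : ∀ X, R ≤ ‖X‖ → ψ X = 0 := fun X hX => hφ0 _ (by
    rwa [norm_smul, norm_inv, Real.norm_of_nonneg hR0.le, le_inv_mul_iff₀ hR0, mul_one])
  have hψK : LipschitzWith (M * ‖R⁻¹‖₊) ψ := hφM.comp (lipschitzWith_smul R⁻¹)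
  have hcoe : ((M * ‖R⁻¹‖₊ : NNReal) : ℝ) = M / R := by
    simp [abs_of_pos hR0, div_eq_mul_inv]
  have hK : M * ‖R⁻¹‖₊ < 1 := by
    rw [← NNReal.coe_lt_coe, hcoe, NNReal.coe_one, div_lt_one hR0]
    exact hR
  have he : ‖(EuclideanSpace.single 0 1 : EuclideanSpace ℝ (Fin (n + 1)))‖ ≤ 1 := by simp
  have hmap : pertMap n φ 1 R = shear ψ (EuclideanSpace.single 0 1) := by
    simp only [pertMap_eq_shear, one_mul, hψ_def]
  have hmap' : pertMap n φ (-1) R = shear (-ψ) (EuclideanSpace.single 0 1) := by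
    simp only [pertMap_eq_shear, neg_one_mul]
    rfl
  simp only [wEnergy_eq_weightedEnergy, pertFun, hmap, hmap', ← hcoe]
  exact weightedEnergy_shear_add_shear_neg_le he hψ hψK hK
    (isOpen_upperHalfBall n R).measurableSet (fun X hX => hu X hX.2) (by fun_prop)
    (fun X hX => Real.rpow_nonneg hX.2.le a) (fun X t => by rw [last_add_smul_single_zero])
    (shear_image_upperHalfBall (isHomeomorph_shear he hψK hK).bijective hψ0)
    (shear_image_upperHalfBall (isHomeomorph_shear he hψK.neg hK).bijective fun X hX => by
      simp [hψ0 X hX])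

end UpperHalfBall

lemma two_div_one_sub_sq_le {m : ℝ} (hm0 : 0 ≤ m) (hm : m ≤ 1 / 2) :
    2 / (1 - m ^ 2) ≤ 2 + 3 * m ^ 2 := by
  have hsq : m ^ 2 ≤ (1 / 2) ^ 2 := by gcongr
  rw [div_le_iff₀ (by linarith)]
  nlinarith [sq_nonneg m]

theorem stmt_13_general (n : ℕ) [NeZero n] (a : ℝ) (φ : EuclideanSpace ℝ (Fin (n + 1)) → ℝ)
    (M : NNReal) (hφ : Differentiable ℝ φ) (hφM : LipschitzWith M φ)
    (hφ0 : ∀ x, 1 ≤ ‖x‖ → φ x = 0) (u : EuclideanSpace ℝ (Fin (n + 1)) → ℝ)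
    (hdiff : ∀ X, 0 < X (Fin.last n) → DifferentiableAt ℝ u X)
    (hhom : ∀ X, 0 < X (Fin.last n) → ∀ t : ℝ, 0 < t → u (t • X) = u X)
    (hfin : wEnergy n a u 1 ≠ ⊤) :
    ∃ C : ℝ, 0 ≤ C ∧ ∃ R₀ : ℝ, 0 < R₀ ∧ ∀ R : ℝ, R₀ ≤ R →
      wEnergy n a (pertFun n φ 1 R u) R + wEnergy n a (pertFun n φ (-1) R u) R
        ≤ 2 * wEnergy n a u R + ENNReal.ofReal (C * R ^ ((n : ℝ) - 3 + a)) := by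
  refine ⟨3 * M ^ 2 * (wEnergy n a u 1).toReal, by positivity, 2 * M + 1, by positivity,
    fun R hR => ?_⟩
  have hR0 : 0 < R := by linarith [M.coe_nonneg]
  have hmR : M / R ≤ 1 / 2 := by
    rw [div_le_iff₀ hR0]
    linarith
  have hpow : R ^ ((n : ℝ) - 1 + a) = R ^ 2 * R ^ ((n : ℝ) - 3 + a) := by
    rw [← Real.rpow_two, ← Real.rpow_add hR0]
    ring_nf
  have hdefect : ENNReal.ofReal (3 * (M / R) ^ 2) * wEnergy n a u R
      = ENNReal.ofReal (3 * M ^ 2 * (wEnergy n a u 1).toReal * R ^ ((n : ℝ) - 3 + a)) := by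
    rw [wEnergy_eq_rpow_mul hR0 hhom, ← ENNReal.ofReal_toReal hfin,
      ← ENNReal.ofReal_mul (by positivity), ← ENNReal.ofReal_mul (by positivity), hpow,
      ENNReal.toReal_ofReal ENNReal.toReal_nonneg]
    field_simp
  calc wEnergy n a (pertFun n φ 1 R u) R + wEnergy n a (pertFun n φ (-1) R u) R
      ≤ ENNReal.ofReal (2 / (1 - (M / R) ^ 2)) * wEnergy n a u R :=
        wEnergy_pertFun_add_le hφ hφM hφ0 hdiff (by linarith [M.coe_nonneg])
    _ ≤ ENNReal.ofReal (2 + 3 * (M / R) ^ 2) * wEnergy n a u R := by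
        gcongr
        exact two_div_one_sub_sq_le (by positivity) hmR
    _ = _ := by
        rw [ENNReal.ofReal_add zero_le_two (by positivity), add_mul, ENNReal.ofReal_ofNat, hdefect]

/-- the case `n = 2`: for `u` homogeneous of degree zero on `ℝ³₊` with finite
weighted energy, `E_R(u_R^+) + E_R(u_R^-) - 2 E_R(u) ≤ C R^{-s}` for all large `R`,
where `a = 1 - s`. -/
theorem stmt_13 (s : ℝ) (hs : s ∈ Set.Ioo (0 : ℝ) 1) (a : ℝ) (haa : a = 1 - s)
    (φ : EuclideanSpace ℝ (Fin 3) → ℝ)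
    (hφ : ContDiff ℝ (⊤ : ℕ∞) φ) (hφc : HasCompactSupport φ)
    (hφ1 : ∀ x, ‖x‖ ≤ 1 / 2 → φ x = 1) (hφ0 : ∀ x, 3 / 4 ≤ ‖x‖ → φ x = 0)
    (u : EuclideanSpace ℝ (Fin 3) → ℝ)
    (hdiff : ∀ X : EuclideanSpace ℝ (Fin 3), 0 < X (Fin.last 2) → DifferentiableAt ℝ u X)
    (hhom : ∀ X : EuclideanSpace ℝ (Fin 3), ∀ t : ℝ, 0 < t → u (t • X) = u X)
    (hfin : ∀ R : ℝ, 0 < R → wEnergy 2 a u R ≠ ⊤) :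
    ∃ C : ℝ, 0 ≤ C ∧ ∃ R₀ : ℝ, 0 < R₀ ∧ ∀ R : ℝ, R₀ ≤ R →
      wEnergy 2 a (pertFun 2 φ 1 R u) R + wEnergy 2 a (pertFun 2 φ (-1) R u) R
        ≤ 2 * wEnergy 2 a u R + ENNReal.ofReal (C * R ^ (-s)) := by
  subst haa
  obtain ⟨M, hφM⟩ := ContDiff.lipschitzWith_of_hasCompactSupport hφc hφ (by simp)
  have hexp : ((2 : ℕ) : ℝ) - 3 + (1 - s) = -s := by norm_num; ring
  simpa only [hexp] using stmt_13_general 2 (1 - s) φ M (hφ.differentiable (by simp)) hφM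
    (fun x hx => hφ0 x (by linarith)) u hdiff (fun X _ t ht => hhom X t ht) (hfin 1 one_pos)
end

section
/- A half-plane is an s-minimal cone in ℝ²: for every s ∈ (0,1), the set H = {x ∈ ℝ² : x_2 > 0} satisfies Per_s(H, B_R) ≤ Per_s(F, B_R) for every R > 0 and every measurable F with F \ B_R = H \ B_R. -/
open MeasureTheory

/-- The interaction energy `L(A,B) = ∫_A ∫_B |x-y|^{-(n+s)} dx dy`. -/
noncomputable def interL (n : ℕ) (s : ℝ) (A B : Set (EuclideanSpace ℝ (Fin n))) : ENNReal :=
  ∫⁻ x in A, ∫⁻ y in B, ENNReal.ofReal (1 / ‖x - y‖ ^ ((n : ℝ) + s))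

/-- The fractional `s`-perimeter `Per_s(E, Ω) = L(E ∩ Ω, ℝⁿ \ E) + L(E \ Ω, Ω \ E)`. -/
noncomputable def fracPer (n : ℕ) (s : ℝ) (E Ω : Set (EuclideanSpace ℝ (Fin n))) : ENNReal :=
  interL n s (E ∩ Ω) Eᶜ + interL n s (E \ Ω) (Ω \ E)

/-!
Substituting `y = x + z` and integrating in `x` first, `Per_s(E, Ω)` becomes the integral over `z`
of `|z|^{-(n+s)}` times the measure of the set of `x ∈ E` that the translation by `z` carries out
of `E` by a jump having an endpoint in `Ω`. Since translations preserve volume, the measure of this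
set minus that of the points carried into `E` depends only on `E \ Ω`. A translation cannot carry
some points out of a half-space and others into it, so a half-space minimizes the integrand for
every single `z`.
-/

section MeasurePreserving

variable {α : Type*} {τ : α → α} {E F H Ω : Set α}

/-- The points of `E` that `τ` carries out of `E` by a jump `x ↦ τ x` with at least one endpoint
in `Ω`. For `τ` the translation by `z`, its volume is the weight of the displacement `z` in the
nonlocal perimeter of `E` relative to `Ω`. -/
def exitSet (τ : α → α) (E Ω : Set α) : Set α :=
  (E \ τ ⁻¹' E) ∩ (Ω ∪ τ ⁻¹' Ω)

lemma exitSet_eq_empty_of_mapsTo (hE : Set.MapsTo τ E E) : exitSet τ E Ω = ∅ := by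
  rw [exitSet, Set.sdiff_eq_empty.2 hE.subset_preimage, Set.empty_inter]

variable [MeasurableSpace α] {μ : Measure α}

lemma measure_exitSet_eq_add (hΩ : MeasurableSet Ω) :
    μ (exitSet τ E Ω) = μ (E ∩ Ω ∩ τ ⁻¹' Eᶜ) + μ (E \ Ω ∩ τ ⁻¹' (Ω \ E)) := by
  rw [← measure_inter_add_sdiff (exitSet τ E Ω) hΩ]
  congr 2 <;> grind [exitSet]

lemma measure_union_preimage_ne_top (hτ : MeasurePreserving τ μ μ) (hΩ : MeasurableSet Ω)
    (hμΩ : μ Ω ≠ ⊤) : μ (Ω ∪ τ ⁻¹' Ω) ≠ ⊤ :=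
  measure_union_ne_top hμΩ (by rwa [hτ.measure_preimage hΩ.nullMeasurableSet])

-- The part of `E` inside `Ω` contributes `μ (E ∩ Ω) = μ (τ ⁻¹' (E ∩ Ω))` to both terms.
lemma measureReal_sub_measureReal_preimage_eq_sdiff (hτ : MeasurePreserving τ μ μ)
    (hE : MeasurableSet E) (hΩ : MeasurableSet Ω) (hμΩ : μ Ω ≠ ⊤) :
    μ.real (E ∩ (Ω ∪ τ ⁻¹' Ω)) - μ.real (τ ⁻¹' E ∩ (Ω ∪ τ ⁻¹' Ω)) =
      μ.real (E \ Ω ∩ τ ⁻¹' Ω) - μ.real (τ ⁻¹' (E \ Ω) ∩ Ω) := by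
  have hμW : μ (Ω ∪ τ ⁻¹' Ω) ≠ ⊤ := measure_union_preimage_ne_top hτ hΩ hμΩ
  have split_source : μ.real (E ∩ (Ω ∪ τ ⁻¹' Ω)) = μ.real (E ∩ Ω) + μ.real (E \ Ω ∩ τ ⁻¹' Ω) := by
    rw [← measureReal_inter_add_sdiff hΩ (measure_inter_ne_top_of_right_ne_top hμW)]
    congr 2 <;> grind
  have split_target : μ.real (τ ⁻¹' E ∩ (Ω ∪ τ ⁻¹' Ω)) =
      μ.real (τ ⁻¹' (E ∩ Ω)) + μ.real (τ ⁻¹' (E \ Ω) ∩ Ω) := by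
    rw [← measureReal_inter_add_sdiff (hτ.measurable hΩ)
      (measure_inter_ne_top_of_right_ne_top hμW)]
    congr 2 <;> grind
  have inside_preserved : μ.real (τ ⁻¹' (E ∩ Ω)) = μ.real (E ∩ Ω) :=
    hτ.measureReal_preimage (hE.inter hΩ).nullMeasurableSet
  linarith

lemma measure_exitSet_le_of_preimage_subset (hτ : MeasurePreserving τ μ μ)
    (hH : MeasurableSet H) (hF : MeasurableSet F) (hΩ : MeasurableSet Ω) (hμΩ : μ Ω ≠ ⊤)
    (hFH : F \ Ω = H \ Ω) (hτH : τ ⁻¹' H ⊆ H) :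
    μ (exitSet τ H Ω) ≤ μ (exitSet τ F Ω) := by
  set W := Ω ∪ τ ⁻¹' Ω
  have hWm : MeasurableSet W := hΩ.union (hτ.measurable hΩ)
  have hμW : μ W ≠ ⊤ := measure_union_preimage_ne_top hτ hΩ hμΩ
  have hfin : ∀ A, μ (A ∩ W) ≠ ⊤ := fun A => measure_inter_ne_top_of_right_ne_top hμW
  have hfin_exit : ∀ A, μ (exitSet τ A Ω) ≠ ⊤ := fun A =>
    measure_ne_top_of_subset (Set.inter_subset_inter_left _ Set.sdiff_subset) (hfin A)
  refine (ENNReal.toReal_le_toReal (hfin_exit H) (hfin_exit F)).1 ?_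
  calc μ.real (exitSet τ H Ω)
      = μ.real (H ∩ W) - μ.real (τ ⁻¹' H ∩ W) := by
        rw [exitSet, Set.inter_sdiff_distrib_right]
        exact measureReal_sdiff (Set.inter_subset_inter_left W hτH)
          ((hτ.measurable hH).inter hWm) (hfin _)
    _ = μ.real (F ∩ W) - μ.real (τ ⁻¹' F ∩ W) := by
        rw [measureReal_sub_measureReal_preimage_eq_sdiff hτ hH hΩ hμΩ,
          measureReal_sub_measureReal_preimage_eq_sdiff hτ hF hΩ hμΩ, hFH]
    _ ≤ μ.real (exitSet τ F Ω) := by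
        rw [exitSet, Set.inter_sdiff_distrib_right]
        exact le_measureReal_sdiff (hfin _)

end MeasurePreserving

section Translation

variable {G : Type*} [MeasurableSpace G] {μ : Measure G} [SFinite μ]

lemma measurable_measure_inter_preimage_add_right [Add G] [MeasurableAdd₂ G] {A B : Set G}
    (hA : MeasurableSet A) (hB : MeasurableSet B) :
    Measurable fun z => μ (A ∩ (· + z) ⁻¹' B) :=
  measurable_measure_prodMk_left
    ((measurable_snd hA).inter ((measurable_snd.add measurable_fst) hB))

lemma setLIntegral_setLIntegral_sub_eq [AddCommGroup G] [MeasurableAdd₂ G]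
    [μ.IsAddLeftInvariant] {k : G → ENNReal} (hk : Measurable k) (A : Set G) {B : Set G}
    (hB : MeasurableSet B) :
    ∫⁻ x in A, ∫⁻ y in B, k (y - x) ∂μ ∂μ = ∫⁻ z, k z * μ (A ∩ (· + z) ⁻¹' B) ∂μ := by
  have hB_add : MeasurableSet {p : G × G | p.1 + p.2 ∈ B} := measurable_add hB
  calc ∫⁻ x in A, ∫⁻ y in B, k (y - x) ∂μ ∂μ
      = ∫⁻ x in A, ∫⁻ z, {p : G × G | p.1 + p.2 ∈ B}.indicator (fun p => k p.2) (x, z) ∂μ ∂μ := by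
        refine lintegral_congr fun x => ?_
        rw [← lintegral_indicator hB, ← lintegral_add_left_eq_self _ x]
        simp [Set.indicator]
    _ = ∫⁻ z, ∫⁻ x in A, ((· + z) ⁻¹' B).indicator (fun _ => k z) x ∂μ ∂μ :=
        lintegral_lintegral_swap ((hk.comp measurable_snd).indicator hB_add).aemeasurable
    _ = ∫⁻ z, k z * μ (A ∩ (· + z) ⁻¹' B) ∂μ := by
        refine lintegral_congr fun z => ?_
        have hBz : MeasurableSet ((· + z) ⁻¹' B) := measurable_add_const z hB
        rw [lintegral_indicator_const hBz, Measure.restrict_apply hBz, Set.inter_comm]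

end Translation

section FractionalPerimeter

variable {n : ℕ} {E F H Ω : Set (EuclideanSpace ℝ (Fin n))}

lemma interL_eq_lintegral (s : ℝ) (A : Set (EuclideanSpace ℝ (Fin n)))
    {B : Set (EuclideanSpace ℝ (Fin n))} (hB : MeasurableSet B) :
    interL n s A B =
      ∫⁻ z, ENNReal.ofReal (1 / ‖z‖ ^ ((n : ℝ) + s)) * volume (A ∩ (· + z) ⁻¹' B) := by
  simpa only [interL, norm_sub_rev] using setLIntegral_setLIntegral_sub_eq (μ := volume)
    (k := fun z => ENNReal.ofReal (1 / ‖z‖ ^ ((n : ℝ) + s))) (by fun_prop) A hB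

lemma fracPer_eq_lintegral_exitSet (s : ℝ) (hE : MeasurableSet E) (hΩ : MeasurableSet Ω) :
    fracPer n s E Ω =
      ∫⁻ z, ENNReal.ofReal (1 / ‖z‖ ^ ((n : ℝ) + s)) * volume (exitSet (· + z) E Ω) := by
  rw [fracPer, interL_eq_lintegral s _ hE.compl, interL_eq_lintegral s _ (hΩ.diff hE),
    ← lintegral_add_left]
  · simp_rw [← mul_add, ← measure_exitSet_eq_add hΩ]
  · exact Measurable.mul (by fun_prop)
      (measurable_measure_inter_preimage_add_right (hE.inter hΩ) hE.compl)

theorem fracPer_le_of_nested_translates (s : ℝ) (hH : MeasurableSet H) (hF : MeasurableSet F)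
    (hΩ : MeasurableSet Ω) (hvol : volume Ω ≠ ⊤) (hFH : F \ Ω = H \ Ω)
    (hnested : ∀ z, H ⊆ (· + z) ⁻¹' H ∨ (· + z) ⁻¹' H ⊆ H) :
    fracPer n s H Ω ≤ fracPer n s F Ω := by
  rw [fracPer_eq_lintegral_exitSet s hH hΩ, fracPer_eq_lintegral_exitSet s hF hΩ]
  refine lintegral_mono fun z => mul_le_mul_right ?_ _
  rcases hnested z with hout | hin
  · simp [exitSet_eq_empty_of_mapsTo hout]
  · exact measure_exitSet_le_of_preimage_subset (measurePreserving_add_right volume z)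
      hH hF hΩ hvol hFH hin

theorem stmt_18_general (s : ℝ) (f : EuclideanSpace ℝ (Fin n) →L[ℝ] ℝ) (c : ℝ)
    (hF : MeasurableSet F) (hΩ : MeasurableSet Ω) (hvol : volume Ω ≠ ⊤)
    (hFH : F \ Ω = {x | c < f x} \ Ω) :
    fracPer n s {x | c < f x} Ω ≤ fracPer n s F Ω := by
  refine fracPer_le_of_nested_translates s (measurableSet_lt (by fun_prop) (by fun_prop))
    hF hΩ hvol hFH fun z => ?_
  rcases le_total 0 (f z) with hz | hz
  · refine Or.inl fun x (hx : c < f x) => show c < f (x + z) from ?_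
    rw [map_add]
    linarith
  · refine Or.inr fun x (hx : c < f (x + z)) => show c < f x from ?_
    rw [map_add] at hx
    linarith

end FractionalPerimeter

/-- the half-plane `H = {x ∈ ℝ² : x₂ > 0}` is `s`-minimal in every ball. -/
theorem stmt_18 (s : ℝ) (hs : s ∈ Set.Ioo (0 : ℝ) 1) (R : ℝ) (hR : 0 < R)
    (F : Set (EuclideanSpace ℝ (Fin 2))) (hF : MeasurableSet F)
    (hFH : F \ Metric.ball 0 R = {x : EuclideanSpace ℝ (Fin 2) | 0 < x 1} \ Metric.ball 0 R) :
    fracPer 2 s {x : EuclideanSpace ℝ (Fin 2) | 0 < x 1} (Metric.ball 0 R)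
      ≤ fracPer 2 s F (Metric.ball 0 R) :=
  stmt_18_general s (EuclideanSpace.proj 1) 0 hF measurableSet_ball measure_ball_lt_top.ne hFH
end

section
/- If E ⊆ ℝ² is an s-minimal cone (tE = E for all t > 0, and E is s-minimal in every ball B_R), then E is a half-plane. -/
open MeasureTheory

/-- `E` is `s`-minimal in the open set `Ω`. -/
def SMinimalIn (n : ℕ) (s : ℝ) (E Ω : Set (EuclideanSpace ℝ (Fin n))) : Prop :=
  fracPer n s E Ω ≠ ⊤ ∧
    ∀ F : Set (EuclideanSpace ℝ (Fin n)), MeasurableSet F → F \ Ω = E \ Ω →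
      fracPer n s E Ω ≤ fracPer n s F Ω


open scoped RealInnerProductSpace

/-!
Deform an `s`-minimal set `E` by the two maps `x ↦ x ± φ(x) c v` with a cutoff function `φ`. In the
sum of the two energies the terms of first order in `c` cancel, so the sum is at most `2 + O(c²)`
times the energy of `E`. Near the origin, `L((E + cv) \ E, E \ (E + cv))` is at most the energy
saved when a deformed set and `E` are replaced by their union and intersection, so minimality makes
it `O(c²)`. For a cone this quantity is `c ^ (n - s)` times its value at `c = 1`, which must
therefore vanish when `n < 2 + s`: every translate of `E` contains `E` or is contained in `E`, up to
a null set. The vectors `v` with `E + v ⊆ E` then form a convex cone `S` with `S ∪ -S` the whole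
space. Such a cone is a half-space, and by Fubini it coincides with `E` almost everywhere.
-/

open Filter Set Metric Module
open scoped Topology Pointwise

section Kernel

theorem rpow_neg_one_add_le {m u : ℝ} (hm : 0 ≤ m) (hu : |u| ≤ 1 / 2) (hmu : m * |u| ≤ 1 / 2) :
    (1 + u) ^ (-m) ≤ 1 - m * u + (2 * m + 4 * m ^ 2) * u ^ 2 := by
  obtain ⟨hu_lower, hu_upper⟩ := abs_le.mp hu
  have h_pos : 0 < 1 + u := by linarith
  have h_log : u * (1 - 2 * u) ≤ Real.log (1 + u) := by
    refine le_trans ?_ (Real.one_sub_inv_le_log_of_pos h_pos)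
    have h_inv : 1 - (1 + u)⁻¹ = u / (1 + u) := by field_simp; ring
    rw [h_inv, le_div_iff₀ h_pos]
    nlinarith [sq_nonneg u]
  set z := u * (1 - 2 * u) * -m with hz_def
  have hz : |z| ≤ 2 * (m * |u|) := by
    have h_factor : |1 - 2 * u| ≤ 2 := abs_le.mpr ⟨by linarith, by linarith⟩
    calc |z| = |u| * |1 - 2 * u| * m := by rw [hz_def, abs_mul, abs_mul, abs_neg, abs_of_nonneg hm]
      _ ≤ |u| * 2 * m := by gcongr
      _ = 2 * (m * |u|) := by ring
  have hz_sq : z ^ 2 ≤ 4 * m ^ 2 * u ^ 2 := by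
    calc z ^ 2 = |z| ^ 2 := (sq_abs z).symm
      _ ≤ (2 * (m * |u|)) ^ 2 := by gcongr
      _ = 4 * m ^ 2 * u ^ 2 := by rw [mul_pow, mul_pow, sq_abs]; ring
  calc (1 + u) ^ (-m) = Real.exp (Real.log (1 + u) * -m) := Real.rpow_def_of_pos h_pos _
    _ ≤ Real.exp z := Real.exp_le_exp.mpr (mul_le_mul_of_nonpos_right h_log (neg_nonpos.mpr hm))
    _ ≤ 1 + z + z ^ 2 := by
      linarith [le_of_abs_le (Real.abs_exp_sub_one_sub_id_le (x := z) (by linarith))]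
    _ ≤ 1 + z + 4 * m ^ 2 * u ^ 2 := by gcongr
    _ = 1 - m * u + (2 * m + 4 * m ^ 2) * u ^ 2 := by rw [hz_def]; ring

-- The first-order terms in `p`, `q` and `α` cancel between the two summands.
theorem one_add_mul_one_add_mul_add_one_sub_mul_one_sub_mul_le {N C τ α p q : ℝ} (hN : 0 ≤ N)
    (hC : 0 ≤ C) (hτ : τ ≤ 1) (hα : |α| ≤ τ) (hp : |p| ≤ τ) (hq : |q| ≤ τ) :
    (1 + p) * (1 + q) * (1 - N * α + C * τ ^ 2) + (1 - p) * (1 - q) * (1 + N * α + C * τ ^ 2) ≤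
      2 + (2 + 4 * N + 4 * C) * τ ^ 2 := by
  have hτ₀ : 0 ≤ τ := (abs_nonneg p).trans hp
  have hpq : p * q ≤ τ ^ 2 := by
    calc p * q ≤ |p| * |q| := (le_abs_self _).trans (abs_mul p q).le
      _ ≤ τ ^ 2 := by rw [sq]; gcongr
  have hα_add : -(α * (p + q)) ≤ 2 * τ ^ 2 := by
    calc -(α * (p + q)) ≤ |α| * |p + q| := (neg_le_abs _).trans (abs_mul _ _).le
      _ ≤ τ * (τ + τ) := by
        gcongr
        exact (abs_add_le p q).trans (add_le_add hp hq)
      _ = 2 * τ ^ 2 := by ring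
  calc (1 + p) * (1 + q) * (1 - N * α + C * τ ^ 2) + (1 - p) * (1 - q) * (1 + N * α + C * τ ^ 2)
      = 2 * (1 + p * q) * (1 + C * τ ^ 2) + 2 * N * -(α * (p + q)) := by ring
    _ ≤ 2 * (1 + τ ^ 2) * (1 + C * τ ^ 2) + 2 * N * (2 * τ ^ 2) := by gcongr
    _ = 2 + (2 + 4 * N + 2 * C + 2 * C * τ ^ 2) * τ ^ 2 := by ring
    _ ≤ 2 + (2 + 4 * N + 2 * C + 2 * C * 1 ^ 2) * τ ^ 2 := by gcongr
    _ = 2 + (2 + 4 * N + 4 * C) * τ ^ 2 := by ring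

variable {V : Type*} [NormedAddCommGroup V] [InnerProductSpace ℝ V] {N τ : ℝ} {a v : V}

theorem abs_inner_div_norm_sq_le (hv : ‖v‖ ≤ τ * ‖a‖) (ha : a ≠ 0) :
    |⟪a, v⟫ / ‖a‖ ^ 2| ≤ τ := by
  rw [abs_div, abs_of_nonneg (sq_nonneg ‖a‖), div_le_iff₀ (by positivity)]
  calc |⟪a, v⟫| ≤ ‖a‖ * ‖v‖ := abs_real_inner_le_norm a v
    _ ≤ ‖a‖ * (τ * ‖a‖) := by gcongr
    _ = τ * ‖a‖ ^ 2 := by ring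

theorem norm_add_sq_eq_norm_sq_mul (ha : a ≠ 0) :
    ‖a + v‖ ^ 2 = ‖a‖ ^ 2 * (1 + (2 * (⟪a, v⟫ / ‖a‖ ^ 2) + (‖v‖ / ‖a‖) ^ 2)) := by
  rw [norm_add_sq_real]
  field_simp [norm_ne_zero_iff.mpr ha]
  ring

theorem one_div_norm_add_rpow_le (hN : 0 ≤ N) (hτ : 6 * ((1 + N) * τ) ≤ 1)
    (ha : a ≠ 0) (hv : ‖v‖ ≤ τ * ‖a‖) :
    1 / ‖a + v‖ ^ N ≤
      1 / ‖a‖ ^ N * (1 - N * (⟪a, v⟫ / ‖a‖ ^ 2) + 9 * (N + N ^ 2) * τ ^ 2) := by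
  have ha_pos : 0 < ‖a‖ := norm_pos_iff.mpr ha
  have hτ₀ : 0 ≤ τ := nonneg_of_mul_nonneg_left ((norm_nonneg v).trans hv) ha_pos
  have hNτ : 0 ≤ N * τ := mul_nonneg hN hτ₀
  set α := ⟪a, v⟫ / ‖a‖ ^ 2
  set β := (‖v‖ / ‖a‖) ^ 2
  have hβ : β ≤ τ := by
    calc β ≤ τ ^ 2 := pow_le_pow_left₀ (by positivity) ((div_le_iff₀ ha_pos).mpr hv) 2
      _ ≤ τ := by nlinarith
  obtain ⟨hu_lower, hu_upper⟩ : -(3 * τ) ≤ 2 * α + β ∧ 2 * α + β ≤ 3 * τ := by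
    obtain ⟨hα_lower, hα_upper⟩ := abs_le.mp (abs_inner_div_norm_sq_le hv ha)
    exact ⟨by linarith [sq_nonneg (‖v‖ / ‖a‖)], by linarith⟩
  have hu_abs : |2 * α + β| ≤ 3 * τ := abs_le.mpr ⟨hu_lower, hu_upper⟩
  have h_pos : 0 ≤ 1 + (2 * α + β) := by linarith
  have h_rpow : ‖a + v‖ ^ N = ‖a‖ ^ N * (1 + (2 * α + β)) ^ (N / 2) := by
    have hN_two : N = (2 : ℕ) * (N / 2) := by push_cast; ring
    rw [hN_two, Real.rpow_natCast_mul (norm_nonneg _), Real.rpow_natCast_mul (norm_nonneg _),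
      norm_add_sq_eq_norm_sq_mul ha, Real.mul_rpow (by positivity) h_pos, ← hN_two]
  rw [h_rpow, one_div, mul_inv, ← one_div, ← Real.rpow_neg h_pos]
  gcongr
  calc (1 + (2 * α + β)) ^ (-(N / 2))
      ≤ 1 - N / 2 * (2 * α + β) + (2 * (N / 2) + 4 * (N / 2) ^ 2) * (2 * α + β) ^ 2 :=
        rpow_neg_one_add_le (by positivity) (by linarith) (by nlinarith)
    _ = 1 - N * α - N / 2 * β + (N + N ^ 2) * (2 * α + β) ^ 2 := by ring
    _ ≤ 1 - N * α - 0 + (N + N ^ 2) * (3 * τ) ^ 2 := by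
      have hu_sq : (2 * α + β) ^ 2 ≤ (3 * τ) ^ 2 := sq_le_sq' hu_lower hu_upper
      gcongr
      positivity
    _ = 1 - N * α + 9 * (N + N ^ 2) * τ ^ 2 := by ring

theorem one_div_norm_add_rpow_add_one_div_norm_sub_rpow_le (hN : 0 < N)
    (hτ : 6 * ((1 + N) * τ) ≤ 1) (hv : ‖v‖ ≤ τ * ‖a‖) {p q : ℝ} (hp : |p| ≤ τ) (hq : |q| ≤ τ) :
    (1 + p) * (1 + q) * (1 / ‖a + v‖ ^ N) + (1 - p) * (1 - q) * (1 / ‖a - v‖ ^ N) ≤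
      (2 + 40 * ((1 + N) * τ) ^ 2) * (1 / ‖a‖ ^ N) := by
  rcases eq_or_ne a 0 with rfl | ha
  · obtain rfl : v = 0 := by simpa using hv
    simp [Real.zero_rpow hN.ne']
  have hτ₀ : 0 ≤ τ := (abs_nonneg p).trans hp
  have hNτ : 0 ≤ N * τ := by positivity
  set K := 1 / ‖a‖ ^ N
  set α := ⟪a, v⟫ / ‖a‖ ^ 2
  set C := 9 * (N + N ^ 2) with hC_def
  have h_add : 1 / ‖a + v‖ ^ N ≤ K * (1 - N * α + C * τ ^ 2) :=
    one_div_norm_add_rpow_le hN.le hτ ha hv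
  have h_sub : 1 / ‖a - v‖ ^ N ≤ K * (1 + N * α + C * τ ^ 2) := by
    have h := one_div_norm_add_rpow_le (v := -v) hN.le hτ ha (by rwa [norm_neg])
    rwa [← sub_eq_add_neg, inner_neg_right, neg_div, mul_neg, sub_neg_eq_add] at h
  obtain ⟨hp_lower, hp_upper⟩ := abs_le.mp hp
  obtain ⟨hq_lower, hq_upper⟩ := abs_le.mp hq
  have h_add_nonneg : 0 ≤ (1 + p) * (1 + q) := mul_nonneg (by linarith) (by linarith)
  have h_sub_nonneg : 0 ≤ (1 - p) * (1 - q) := mul_nonneg (by linarith) (by linarith)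
  calc (1 + p) * (1 + q) * (1 / ‖a + v‖ ^ N) + (1 - p) * (1 - q) * (1 / ‖a - v‖ ^ N)
      ≤ (1 + p) * (1 + q) * (K * (1 - N * α + C * τ ^ 2)) +
        (1 - p) * (1 - q) * (K * (1 + N * α + C * τ ^ 2)) := by gcongr
    _ = ((1 + p) * (1 + q) * (1 - N * α + C * τ ^ 2) +
        (1 - p) * (1 - q) * (1 + N * α + C * τ ^ 2)) * K := by ring
    _ ≤ (2 + (2 + 4 * N + 4 * C) * τ ^ 2) * K :=
      mul_le_mul_of_nonneg_right (one_add_mul_one_add_mul_add_one_sub_mul_one_sub_mul_le hN.le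
        (by positivity) (by linarith) (abs_inner_div_norm_sq_le hv ha) hp hq) (by positivity)
    _ ≤ (2 + 40 * (1 + N) ^ 2 * τ ^ 2) * K := by
      gcongr
      nlinarith [hC_def]
    _ = (2 + 40 * ((1 + N) * τ) ^ 2) * K := by ring

end Kernel

section Energy

variable {n : ℕ} {s : ℝ} {A A' B B' C E F X Ω : Set (EuclideanSpace ℝ (Fin n))}

theorem measurable_one_div_norm_sub_rpow (n : ℕ) (s : ℝ) :
    Measurable fun z : EuclideanSpace ℝ (Fin n) × EuclideanSpace ℝ (Fin n) =>
      ENNReal.ofReal (1 / ‖z.1 - z.2‖ ^ ((n : ℝ) + s)) := by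
  fun_prop

theorem interL_union_left (hB : MeasurableSet B) (h : Disjoint A B) :
    interL n s (A ∪ B) C = interL n s A C + interL n s B C :=
  lintegral_union hB h

theorem interL_union_right (hB : MeasurableSet B) (h : Disjoint A B) :
    interL n s C (A ∪ B) = interL n s C A + interL n s C B := by
  simp only [interL, lintegral_union hB h]
  exact lintegral_add_left (measurable_one_div_norm_sub_rpow n s).lintegral_prod_right' _

theorem interL_inter_add_sdiff (hX : MeasurableSet X) :
    interL n s (A ∩ X) B + interL n s (A \ X) B = interL n s A B :=
  lintegral_inter_add_sdiff _ A hX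

theorem interL_mono (hA : A ⊆ A') (hB : B ⊆ B') : interL n s A B ≤ interL n s A' B' :=
  (lintegral_mono_set hA).trans (lintegral_mono fun _ => lintegral_mono_set hB)

theorem fracPer_union_add_interL (hΩ : MeasurableSet Ω) (hX : MeasurableSet X) (hXΩ : X ⊆ Ω)
    (hEX : Disjoint E X) :
    fracPer n s (E ∪ X) Ω + interL n s E X = fracPer n s E Ω + interL n s X (E ∪ X)ᶜ := by
  have h_inter : (E ∪ X) ∩ Ω = E ∩ Ω ∪ X := by
    rw [union_inter_distrib_right, inter_eq_left.mpr hXΩ]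
  have h_sdiff : (E ∪ X) \ Ω = E \ Ω := by
    rw [union_sdiff_distrib, sdiff_eq_empty.mpr hXΩ, union_empty]
  have h_compl : Eᶜ = (E ∪ X)ᶜ ∪ X := by
    rw [compl_union, ← sdiff_eq, sdiff_union_of_subset hEX.subset_compl_left]
  have h_sdiff_left : Ω \ E = Ω \ (E ∪ X) ∪ X := by
    rw [← sdiff_sdiff, sdiff_union_of_subset (subset_sdiff.mpr ⟨hXΩ, hEX.symm⟩)]
  have h_disj : Disjoint (E ∪ X)ᶜ X := disjoint_compl_left_iff_subset.mpr subset_union_right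
  have h_disj_left : Disjoint (Ω \ (E ∪ X)) X :=
    disjoint_sdiff_left.mono_right subset_union_right
  simp only [fracPer]
  rw [h_inter, h_sdiff, h_compl, h_sdiff_left,
    interL_union_left hX (hEX.mono_left inter_subset_left), interL_union_right hX h_disj,
    interL_union_right hX h_disj_left, ← interL_inter_add_sdiff hΩ (A := E)]
  ring

theorem interL_le_fracPer (hΩ : MeasurableSet Ω) (hXΩ : X ⊆ Ω) (hEX : Disjoint E X) :
    interL n s E X ≤ fracPer n s E Ω := by
  rw [← interL_inter_add_sdiff hΩ]
  exact add_le_add (interL_mono Subset.rfl hEX.subset_compl_left)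
    (interL_mono Subset.rfl (subset_sdiff.mpr ⟨hXΩ, hEX.symm⟩))

theorem fracPer_union_add_fracPer_inter_le (hΩ : MeasurableSet Ω) (hA : MeasurableSet A)
    (hB : MeasurableSet B) (h : B \ A ⊆ Ω) :
    fracPer n s (A ∪ B) Ω + fracPer n s (A ∩ B) Ω + interL n s (A \ B) (B \ A) ≤
      fracPer n s A Ω + fracPer n s B Ω := by
  have h_A := fracPer_union_add_interL (n := n) (s := s) hΩ (hB.diff hA) h disjoint_sdiff_right
  have h_B := fracPer_union_add_interL (n := n) (s := s) (E := B ∩ A) hΩ (hB.diff hA) h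
    (disjoint_sdiff_right.mono_left inter_subset_right)
  rw [union_sdiff_self, ← interL_inter_add_sdiff hB] at h_A
  rw [inter_union_sdiff, inter_comm B A] at h_B
  rcases eq_or_ne (fracPer n s A Ω) ⊤ with h_top | h_top
  · simp [h_top]
  have h_fin : interL n s (A ∩ B) (B \ A) ≠ ⊤ := ne_top_of_le_ne_top h_top
    ((interL_mono inter_subset_left Subset.rfl).trans
      (interL_le_fracPer hΩ h disjoint_sdiff_right))
  refine (ENNReal.add_le_add_iff_right h_fin).mp ?_
  calc fracPer n s (A ∪ B) Ω + fracPer n s (A ∩ B) Ω + interL n s (A \ B) (B \ A) +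
        interL n s (A ∩ B) (B \ A)
      = fracPer n s (A ∪ B) Ω +
        (interL n s (A ∩ B) (B \ A) + interL n s (A \ B) (B \ A)) + fracPer n s (A ∩ B) Ω := by
        ring
    _ = fracPer n s A Ω + (fracPer n s (A ∩ B) Ω + interL n s (B \ A) (A ∪ B)ᶜ) := by
      rw [h_A]; ring
    _ ≤ fracPer n s A Ω + (fracPer n s (A ∩ B) Ω + interL n s (B \ A) Bᶜ) := by
      gcongr
      exact interL_mono Subset.rfl (compl_subset_compl.mpr subset_union_right)
    _ = fracPer n s A Ω + fracPer n s B Ω + interL n s (A ∩ B) (B \ A) := by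
      rw [← h_B, add_assoc]

namespace SMinimalIn

theorem interL_sdiff_add_fracPer_le (hE : SMinimalIn n s E Ω) (hΩ : MeasurableSet Ω)
    (hEm : MeasurableSet E) (hF : MeasurableSet F) (h : F \ Ω = E \ Ω) :
    interL n s (F \ E) (E \ F) + fracPer n s E Ω ≤ fracPer n s F Ω := by
  have h_union : fracPer n s E Ω ≤ fracPer n s (F ∪ E) Ω :=
    hE.2 _ (hF.union hEm) (by rw [union_sdiff_distrib, h, union_self])
  have h_inter : fracPer n s E Ω ≤ fracPer n s (F ∩ E) Ω :=
    hE.2 _ (hF.inter hEm) (by rw [sdiff_inter_distrib_right, h, inter_self])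
  have h_sub : E \ F ⊆ Ω := fun x hx => by_contra fun hxΩ =>
    hx.2 ((Set.ext_iff.mp h x).mpr ⟨hx.1, hxΩ⟩).1
  refine (ENNReal.add_le_add_iff_right hE.1).mp ?_
  calc interL n s (F \ E) (E \ F) + fracPer n s E Ω + fracPer n s E Ω
      ≤ interL n s (F \ E) (E \ F) + fracPer n s (F ∪ E) Ω + fracPer n s (F ∩ E) Ω := by gcongr
    _ = fracPer n s (F ∪ E) Ω + fracPer n s (F ∩ E) Ω + interL n s (F \ E) (E \ F) := by ring
    _ ≤ fracPer n s F Ω + fracPer n s E Ω := fracPer_union_add_fracPer_inter_le hΩ hF hEm h_sub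

theorem interL_sdiff_le {F' : Set (EuclideanSpace ℝ (Fin n))} {δ : ℝ} (hE : SMinimalIn n s E Ω)
    (hΩ : MeasurableSet Ω) (hEm : MeasurableSet E) (hF : MeasurableSet F) (h : F \ Ω = E \ Ω)
    (hF' : MeasurableSet F') (h' : F' \ Ω = E \ Ω) (hδ : 0 ≤ δ)
    (h_add : fracPer n s F Ω + fracPer n s F' Ω ≤ ENNReal.ofReal (2 + δ) * fracPer n s E Ω) :
    interL n s (F \ E) (E \ F) ≤ ENNReal.ofReal δ * fracPer n s E Ω := by
  have h_fin : 2 * fracPer n s E Ω ≠ ⊤ := ENNReal.mul_ne_top (by simp) hE.1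
  refine (ENNReal.add_le_add_iff_right h_fin).mp ?_
  calc interL n s (F \ E) (E \ F) + 2 * fracPer n s E Ω
      = interL n s (F \ E) (E \ F) + fracPer n s E Ω + fracPer n s E Ω := by ring
    _ ≤ fracPer n s F Ω + fracPer n s F' Ω := by
      gcongr
      exacts [hE.interL_sdiff_add_fracPer_le hΩ hEm hF h, hE.2 F' hF' h']
    _ ≤ ENNReal.ofReal (2 + δ) * fracPer n s E Ω := h_add
    _ = ENNReal.ofReal δ * fracPer n s E Ω + 2 * fracPer n s E Ω := by
      rw [ENNReal.ofReal_add zero_le_two hδ, ENNReal.ofReal_ofNat]; ring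

end SMinimalIn

theorem interL_image {f : EuclideanSpace ℝ (Fin n) → EuclideanSpace ℝ (Fin n)}
    {f' : EuclideanSpace ℝ (Fin n) → EuclideanSpace ℝ (Fin n) →L[ℝ] EuclideanSpace ℝ (Fin n)}
    (hf : ∀ x, HasFDerivAt f (f' x) x) (hf_inj : Function.Injective f)
    (hA : MeasurableSet A) (hB : MeasurableSet B) :
    interL n s (f '' A) (f '' B) = ∫⁻ x in A, ∫⁻ y in B,
      ENNReal.ofReal (|(f' x).det| * |(f' y).det| * (1 / ‖f x - f y‖ ^ ((n : ℝ) + s))) := by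
  unfold interL
  rw [lintegral_image_eq_lintegral_abs_det_fderiv_mul volume hA
    (fun x _ => (hf x).hasFDerivWithinAt) hf_inj.injOn]
  refine lintegral_congr fun x => ?_
  rw [lintegral_image_eq_lintegral_abs_det_fderiv_mul volume hB
    (fun y _ => (hf y).hasFDerivWithinAt) hf_inj.injOn,
    ← lintegral_const_mul' _ _ ENNReal.ofReal_ne_top]
  refine lintegral_congr fun y => ?_
  rw [mul_assoc, ENNReal.ofReal_mul (abs_nonneg _), ENNReal.ofReal_mul (abs_nonneg _)]

theorem interL_smul_smul {c : ℝ} (hc : 0 < c) (hA : MeasurableSet A) (hB : MeasurableSet B) :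
    interL n s (c • A) (c • B) = ENNReal.ofReal (c ^ ((n : ℝ) - s)) * interL n s A B := by
  have h_deriv (x : EuclideanSpace ℝ (Fin n)) :
      HasFDerivAt (c • ·) (c • ContinuousLinearMap.id ℝ (EuclideanSpace ℝ (Fin n))) x :=
    (hasFDerivAt_id x).const_smul c
  have h_det : (c • ContinuousLinearMap.id ℝ (EuclideanSpace ℝ (Fin n))).det = c ^ (n : ℝ) := by
    simp [ContinuousLinearMap.det, LinearMap.det_smul]
  have h_kernel (x y : EuclideanSpace ℝ (Fin n)) :
      |c ^ (n : ℝ)| * |c ^ (n : ℝ)| * (1 / ‖c • x - c • y‖ ^ ((n : ℝ) + s)) =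
        c ^ ((n : ℝ) - s) * (1 / ‖x - y‖ ^ ((n : ℝ) + s)) := by
    have h_exp : c ^ (n : ℝ) * c ^ (n : ℝ) = c ^ ((n : ℝ) - s) * c ^ ((n : ℝ) + s) := by
      rw [← Real.rpow_add hc, ← Real.rpow_add hc]
      ring_nf
    rw [← smul_sub, norm_smul_of_nonneg hc.le, Real.mul_rpow hc.le (norm_nonneg _),
      abs_of_pos (Real.rpow_pos_of_pos hc _), h_exp]
    field_simp
  rw [← image_smul, ← image_smul, interL_image h_deriv (smul_right_injective _ hc.ne') hA hB]
  simp only [h_det, h_kernel, ENNReal.ofReal_mul (Real.rpow_nonneg hc.le _),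
    lintegral_const_mul' _ _ ENNReal.ofReal_ne_top, interL]

theorem volume_eq_zero_or_of_interL_eq_zero (hA : MeasurableSet A) (hB : MeasurableSet B)
    (hAB : Disjoint A B) (h : interL n s A B = 0) : volume A = 0 ∨ volume B = 0 := by
  rw [interL, setLIntegral_eq_zero_iff hA
    (measurable_one_div_norm_sub_rpow n s).lintegral_prod_right'] at h
  refine or_iff_not_imp_left.mpr fun hA_ne => ?_
  obtain ⟨x, hxA, hx⟩ : ∃ x ∈ A,
      ∫⁻ y in B, ENNReal.ofReal (1 / ‖x - y‖ ^ ((n : ℝ) + s)) = 0 := by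
    by_contra! h_pos
    exact hA_ne (measure_eq_zero_iff_ae_notMem.mpr (h.mono fun x hx hxA => h_pos x hxA (hx hxA)))
  rw [setLIntegral_eq_zero_iff hB (by fun_prop)] at hx
  refine measure_eq_zero_iff_ae_notMem.mpr (hx.mono fun y hy hyB => ?_)
  have h_pos : 0 < ‖x - y‖ := norm_sub_pos_iff.mpr (hAB.ne_of_mem hxA hyB)
  exact (ENNReal.ofReal_pos.mpr (by positivity)).ne' (hy hyB)

end Energy

section EqOnCompl

variable {α : Type*} {f : α → α} {E Ω : Set α}

theorem image_eq_self_of_eqOn_compl (hf : Function.Bijective f) (hfΩ : EqOn f id Ωᶜ) :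
    f '' Ω = Ω := by
  rw [← compl_inj_iff, ← image_compl_eq hf, hfΩ.image_eq, image_id]

theorem image_sdiff_eq_of_eqOn_compl (hf : Function.Bijective f) (hfΩ : EqOn f id Ωᶜ) :
    f '' E \ Ω = E \ Ω := by
  nth_rw 1 [← image_eq_self_of_eqOn_compl hf hfΩ]
  rw [← image_sdiff hf.1, (hfΩ.mono (sdiff_subset_compl E Ω)).image_eq, image_id]

theorem fracPer_image_of_eqOn_compl {n : ℕ} {s : ℝ}
    {f : EuclideanSpace ℝ (Fin n) → EuclideanSpace ℝ (Fin n)}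
    {E Ω : Set (EuclideanSpace ℝ (Fin n))} (hf : Function.Bijective f) (hfΩ : EqOn f id Ωᶜ) :
    fracPer n s (f '' E) Ω =
      interL n s (f '' (E ∩ Ω)) (f '' Eᶜ) + interL n s (f '' (E \ Ω)) (f '' (Ω \ E)) := by
  rw [image_inter hf.1, image_compl_eq hf, image_sdiff hf.1, image_sdiff hf.1,
    image_eq_self_of_eqOn_compl hf hfΩ, fracPer]

end EqOnCompl

section CutoffShift

theorem bijective_add_of_lipschitzWith {V : Type*} [NormedAddCommGroup V] [NormedSpace ℝ V]
    [CompleteSpace V] {g : V → V} {K : NNReal} (hg : LipschitzWith K g) (hK : K < 1) :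
    Function.Bijective fun x => x + g x := by
  have h_approx : ApproximatesLinearOn (fun x => x + g x)
      (ContinuousLinearEquiv.refl ℝ V : V →L[ℝ] V) univ K := by
    rw [ApproximatesLinearOn.approximatesLinearOn_iff_lipschitzOnWith, lipschitzOnWith_univ]
    convert hg
    ext x
    simp
  have h_const : Subsingleton V ∨
      K < ‖((ContinuousLinearEquiv.refl ℝ V).symm : V →L[ℝ] V)‖₊⁻¹ := by
    rcases subsingleton_or_nontrivial V with hV | hV
    · exact .inl hV
    · right
      rwa [ContinuousLinearEquiv.refl_symm, ContinuousLinearEquiv.coe_refl,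
        ContinuousLinearMap.nnnorm_id, inv_one]
  exact ⟨injOn_univ.mp (h_approx.injOn h_const), h_approx.surjective h_const⟩

/-- The map translating by `v` where `φ = 1` and fixing the points where `φ = 0`; for a cutoff
function `φ` it turns the translation by `v` into a compactly supported deformation. -/
def cutoffShift {V : Type*} [AddCommGroup V] [Module ℝ V] (φ : V → ℝ) (v x : V) : V :=
  x + φ x • v

section NormedSpace

variable {V : Type*} [NormedAddCommGroup V] [NormedSpace ℝ V] {φ : V → ℝ} {Λ : NNReal} {v x y : V}

theorem cutoffShift_sub_cutoffShift :
    cutoffShift φ v x - cutoffShift φ v y = x - y + (φ x - φ y) • v := by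
  simp only [cutoffShift, sub_smul]
  abel

theorem eqOn_cutoffShift_id_compl {Ω : Set V} (hφΩ : ∀ x ∉ Ω, φ x = 0) (v : V) :
    EqOn (cutoffShift φ v) id Ωᶜ :=
  fun x hx => by simp [cutoffShift, hφΩ x hx]

theorem cutoffShift_bijective [CompleteSpace V] (hφ : LipschitzWith Λ φ) (hv : Λ * ‖v‖ < 1) :
    Function.Bijective (cutoffShift φ v) := by
  refine bijective_add_of_lipschitzWith (K := Λ * ‖v‖₊) ?_ hv
  refine LipschitzWith.of_dist_le_mul fun x y => ?_
  rw [dist_eq_norm, ← sub_smul, norm_smul, ← dist_eq_norm]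
  calc dist (φ x) (φ y) * ‖v‖ ≤ Λ * dist x y * ‖v‖ := by gcongr; exact hφ.dist_le_mul x y
    _ = Λ * ‖v‖ * dist x y := by ring

theorem hasFDerivAt_cutoffShift (hφ : Differentiable ℝ φ) (v x : V) :
    HasFDerivAt (cutoffShift φ v) (.id ℝ V + (fderiv ℝ φ x).smulRight v) x :=
  (hasFDerivAt_id x).add ((hφ x).hasFDerivAt.smul_const v)

theorem mem_image_cutoffShift_iff {E : Set V} (hφ : Function.Injective (cutoffShift φ v))
    (hy : φ (y - v) = 1) :
    y ∈ cutoffShift φ v '' E ↔ y ∈ v +ᵥ E := by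
  have h_shift : cutoffShift φ v (y - v) = y := by simp [cutoffShift, hy]
  rw [mem_vadd_set_iff_neg_vadd_mem, vadd_eq_add, neg_add_eq_sub]
  nth_rw 1 [← h_shift]
  exact hφ.mem_set_image

theorem det_id_add_smulRight [FiniteDimensional ℝ V] (l : V →L[ℝ] ℝ) (v : V) :
    (ContinuousLinearMap.id ℝ V + l.smulRight v).det = 1 + l v :=
  LinearMap.transvection.det (l : V →ₗ[ℝ] ℝ) v

theorem abs_fderiv_apply_le_of_lipschitzWith (hφ : LipschitzWith Λ φ) :
    |fderiv ℝ φ x v| ≤ Λ * ‖v‖ :=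
  (fderiv ℝ φ x).le_of_opNorm_le (norm_fderiv_le_of_lipschitz ℝ hφ) v

theorem measurableSet_image_cutoffShift [FiniteDimensional ℝ V] [MeasurableSpace V] [BorelSpace V]
    {E : Set V} (hφ : LipschitzWith Λ φ) (hφ' : Differentiable ℝ φ) (hv : Λ * ‖v‖ < 1)
    (hE : MeasurableSet E) : MeasurableSet (cutoffShift φ v '' E) :=
  have := FiniteDimensional.complete ℝ V
  measurable_image_of_fderivWithin hE
    (fun x _ => (hasFDerivAt_cutoffShift hφ' v x).hasFDerivWithinAt)
    (cutoffShift_bijective hφ hv).1.injOn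

end NormedSpace

variable {n : ℕ} {s : ℝ} {A B E Ω : Set (EuclideanSpace ℝ (Fin n))}
  {φ : EuclideanSpace ℝ (Fin n) → ℝ} {Λ : NNReal} {v : EuclideanSpace ℝ (Fin n)}

theorem lt_one_of_six_mul_one_add_mul_le {N τ : ℝ} (hN : 0 ≤ N) (hτ : 0 ≤ τ)
    (h : 6 * ((1 + N) * τ) ≤ 1) : τ < 1 := by
  have hNτ : 0 ≤ N * τ := mul_nonneg hN hτ
  linarith

theorem interL_image_cutoffShift_add_le (hns : 0 < (n : ℝ) + s) (hφ : LipschitzWith Λ φ)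
    (hφ' : Differentiable ℝ φ) (hv : 6 * ((1 + ((n : ℝ) + s)) * (Λ * ‖v‖)) ≤ 1)
    (hA : MeasurableSet A) (hB : MeasurableSet B) :
    interL n s (cutoffShift φ v '' A) (cutoffShift φ v '' B) +
        interL n s (cutoffShift φ (-v) '' A) (cutoffShift φ (-v) '' B) ≤
      ENNReal.ofReal (2 + 40 * ((1 + ((n : ℝ) + s)) * (Λ * ‖v‖)) ^ 2) * interL n s A B := by
  have h_lt : Λ * ‖v‖ < 1 := lt_one_of_six_mul_one_add_mul_le hns.le (by positivity) hv
  have h_fderiv (x : EuclideanSpace ℝ (Fin n)) : |fderiv ℝ φ x v| ≤ Λ * ‖v‖ :=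
    abs_fderiv_apply_le_of_lipschitzWith hφ
  have h_det (x : EuclideanSpace ℝ (Fin n)) :
      |1 + fderiv ℝ φ x v| = 1 + fderiv ℝ φ x v ∧ |1 - fderiv ℝ φ x v| = 1 - fderiv ℝ φ x v := by
    obtain ⟨h_lower, h_upper⟩ := abs_le.mp (h_fderiv x)
    exact ⟨abs_of_nonneg (by linarith), abs_of_nonneg (by linarith)⟩
  have h_norm (x y : EuclideanSpace ℝ (Fin n)) : ‖(φ x - φ y) • v‖ ≤ Λ * ‖v‖ * ‖x - y‖ := by
    rw [norm_smul, ← dist_eq_norm, ← dist_eq_norm]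
    calc dist (φ x) (φ y) * ‖v‖ ≤ Λ * dist x y * ‖v‖ := by gcongr; exact hφ.dist_le_mul x y
      _ = Λ * ‖v‖ * dist x y := by ring
  rw [interL_image (hasFDerivAt_cutoffShift hφ' v) (cutoffShift_bijective hφ h_lt).1 hA hB,
    interL_image (hasFDerivAt_cutoffShift hφ' (-v))
      (cutoffShift_bijective hφ (by rwa [norm_neg])).1 hA hB]
  simp only [det_id_add_smulRight, cutoffShift_sub_cutoffShift, map_neg, smul_neg,
    ← sub_eq_add_neg]
  refine (le_lintegral_add _ _).trans ?_
  rw [interL, ← lintegral_const_mul' _ _ ENNReal.ofReal_ne_top]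
  refine lintegral_mono fun x => (le_lintegral_add _ _).trans ?_
  rw [← lintegral_const_mul' _ _ ENNReal.ofReal_ne_top]
  refine lintegral_mono fun y => ?_
  beta_reduce
  rw [← ENNReal.ofReal_add (by positivity) (by positivity), ← ENNReal.ofReal_mul (by positivity),
    (h_det x).1, (h_det x).2, (h_det y).1, (h_det y).2]
  exact ENNReal.ofReal_le_ofReal (one_div_norm_add_rpow_add_one_div_norm_sub_rpow_le hns hv
    (h_norm x y) (h_fderiv x) (h_fderiv y))

theorem fracPer_image_cutoffShift_add_le (hns : 0 < (n : ℝ) + s) (hφ : LipschitzWith Λ φ)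
    (hφ' : Differentiable ℝ φ) (hφΩ : ∀ x ∉ Ω, φ x = 0)
    (hv : 6 * ((1 + ((n : ℝ) + s)) * (Λ * ‖v‖)) ≤ 1) (hΩ : MeasurableSet Ω)
    (hE : MeasurableSet E) :
    fracPer n s (cutoffShift φ v '' E) Ω + fracPer n s (cutoffShift φ (-v) '' E) Ω ≤
      ENNReal.ofReal (2 + 40 * ((1 + ((n : ℝ) + s)) * (Λ * ‖v‖)) ^ 2) * fracPer n s E Ω := by
  have h_lt : Λ * ‖v‖ < 1 := lt_one_of_six_mul_one_add_mul_le hns.le (by positivity) hv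
  rw [fracPer_image_of_eqOn_compl (cutoffShift_bijective hφ h_lt)
      (eqOn_cutoffShift_id_compl hφΩ v),
    fracPer_image_of_eqOn_compl (cutoffShift_bijective hφ (by rwa [norm_neg]))
      (eqOn_cutoffShift_id_compl hφΩ (-v)),
    add_add_add_comm, fracPer, mul_add]
  exact add_le_add
    (interL_image_cutoffShift_add_le hns hφ hφ' hv (hE.inter hΩ) hE.compl)
    (interL_image_cutoffShift_add_le hns hφ hφ' hv (hE.diff hΩ) (hΩ.diff hE))

theorem SMinimalIn.interL_image_cutoffShift_sdiff_le (hE : SMinimalIn n s E Ω)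
    (hΩ : MeasurableSet Ω) (hEm : MeasurableSet E) (hns : 0 < (n : ℝ) + s)
    (hφ : LipschitzWith Λ φ) (hφ' : Differentiable ℝ φ) (hφΩ : ∀ x ∉ Ω, φ x = 0)
    (hv : 6 * ((1 + ((n : ℝ) + s)) * (Λ * ‖v‖)) ≤ 1) :
    interL n s (cutoffShift φ v '' E \ E) (E \ cutoffShift φ v '' E) ≤
      ENNReal.ofReal (40 * ((1 + ((n : ℝ) + s)) * (Λ * ‖v‖)) ^ 2) * fracPer n s E Ω := by
  have h_lt : Λ * ‖v‖ < 1 := lt_one_of_six_mul_one_add_mul_le hns.le (by positivity) hv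
  have h_lt_neg : Λ * ‖-v‖ < 1 := by rwa [norm_neg]
  exact hE.interL_sdiff_le hΩ hEm
    (measurableSet_image_cutoffShift hφ hφ' h_lt hEm)
    (image_sdiff_eq_of_eqOn_compl (cutoffShift_bijective hφ h_lt)
      (eqOn_cutoffShift_id_compl hφΩ v))
    (measurableSet_image_cutoffShift hφ hφ' h_lt_neg hEm)
    (image_sdiff_eq_of_eqOn_compl (cutoffShift_bijective hφ h_lt_neg)
      (eqOn_cutoffShift_id_compl hφΩ (-v)))
    (by positivity) (fracPer_image_cutoffShift_add_le hns hφ hφ' hφΩ hv hΩ hEm)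

theorem SMinimalIn.interL_vadd_sdiff_inter_le {U : Set (EuclideanSpace ℝ (Fin n))}
    (hE : SMinimalIn n s E Ω) (hΩ : MeasurableSet Ω) (hEm : MeasurableSet E)
    (hns : 0 < (n : ℝ) + s) (hφ : LipschitzWith Λ φ) (hφ' : Differentiable ℝ φ)
    (hφΩ : ∀ x ∉ Ω, φ x = 0) (hv : 6 * ((1 + ((n : ℝ) + s)) * (Λ * ‖v‖)) ≤ 1)
    (hφU : ∀ y ∈ U, φ (y - v) = 1) :
    interL n s (((v +ᵥ E) \ E) ∩ U) ((E \ (v +ᵥ E)) ∩ U) ≤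
      ENNReal.ofReal (40 * ((1 + ((n : ℝ) + s)) * (Λ * ‖v‖)) ^ 2) * fracPer n s E Ω := by
  have h_mem (y) (hy : y ∈ U) : y ∈ cutoffShift φ v '' E ↔ y ∈ v +ᵥ E :=
    mem_image_cutoffShift_iff
      (cutoffShift_bijective hφ (lt_one_of_six_mul_one_add_mul_le hns.le (by positivity) hv)).1
      (hφU y hy)
  refine (interL_mono ?_ ?_).trans
    (hE.interL_image_cutoffShift_sdiff_le hΩ hEm hns hφ hφ' hφΩ hv)
  · exact fun y hy => ⟨(h_mem y hy.2).mpr hy.1.1, hy.1.2⟩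
  · exact fun y hy => ⟨hy.1.1, fun hy' => hy.1.2 ((h_mem y hy.2).mp hy')⟩

theorem SMinimalIn.exists_interL_vadd_sdiff_le (hE : SMinimalIn n s E Ω) (hΩ : MeasurableSet Ω)
    (h₀ : Ω ∈ 𝓝 0) (hEm : MeasurableSet E) (hns : 0 < (n : ℝ) + s) :
    ∃ r > 0, ∃ C : ℝ, ∀ᶠ v : EuclideanSpace ℝ (Fin n) in 𝓝 0,
      interL n s (((v +ᵥ E) \ E) ∩ ball 0 r) ((E \ (v +ᵥ E)) ∩ ball 0 r) ≤
        ENNReal.ofReal (C * ‖v‖ ^ 2) := by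
  obtain ⟨R, hR, hRΩ⟩ := Metric.mem_nhds_iff.mp h₀
  let φ : ContDiffBump (0 : EuclideanSpace ℝ (Fin n)) := ⟨R / 2, R, half_pos hR, half_lt_self hR⟩
  obtain ⟨Λ, hΛ⟩ := ContDiff.lipschitzWith_of_hasCompactSupport φ.hasCompactSupport
    (φ.contDiff (n := 1)) one_ne_zero
  have hφ : Differentiable ℝ φ := φ.contDiff.differentiable one_ne_zero
  have hφΩ : ∀ x ∉ Ω, φ x = 0 := fun x hx =>
    Function.notMem_support.mp fun hxφ => hx (hRΩ (φ.support_eq.le hxφ))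
  have h_small : ∀ᶠ v : EuclideanSpace ℝ (Fin n) in 𝓝 0,
      6 * ((1 + ((n : ℝ) + s)) * (Λ * ‖v‖)) < 1 :=
    (Continuous.tendsto' (by fun_prop) _ 0 (by simp)).eventually_lt_const one_pos
  refine ⟨R / 4, by positivity,
    40 * ((1 + ((n : ℝ) + s)) * Λ) ^ 2 * (fracPer n s E Ω).toReal, ?_⟩
  filter_upwards [h_small, ball_mem_nhds _ (by positivity : 0 < R / 4)] with v hv hvR
  have hφ_one : ∀ y ∈ ball 0 (R / 4), φ (y - v) = 1 := by
    intro y hy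
    refine φ.one_of_mem_closedBall (mem_closedBall_zero_iff.mpr ?_)
    rw [mem_ball_zero_iff] at hy hvR
    change ‖y - v‖ ≤ R / 2
    linarith [norm_sub_le y v]
  calc interL n s (((v +ᵥ E) \ E) ∩ ball 0 (R / 4)) ((E \ (v +ᵥ E)) ∩ ball 0 (R / 4))
      ≤ ENNReal.ofReal (40 * ((1 + ((n : ℝ) + s)) * (Λ * ‖v‖)) ^ 2) * fracPer n s E Ω :=
        hE.interL_vadd_sdiff_inter_le hΩ hEm hns hΛ hφ hφΩ hv.le hφ_one
    _ = ENNReal.ofReal (40 * ((1 + ((n : ℝ) + s)) * Λ) ^ 2 * (fracPer n s E Ω).toReal *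
        ‖v‖ ^ 2) := by
      nth_rw 1 [← ENNReal.ofReal_toReal hE.1]
      rw [← ENNReal.ofReal_mul (by positivity)]
      ring_nf

end CutoffShift

section BlowUp

theorem smul_vadd_set {R V : Type*} [Monoid R] [AddGroup V] [DistribMulAction R V] (c : R) (v : V)
    (A : Set V) : c • (v +ᵥ A) = c • v +ᵥ c • A := by
  simp only [← image_smul, ← image_vadd, image_image, vadd_eq_add, smul_add]

theorem eventually_measure_inter_ball_ne_zero {X : Type*} [PseudoMetricSpace X] [MeasurableSpace X]
    {μ : Measure X} {A : Set X} (hA : μ A ≠ 0) (x : X) :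
    ∀ᶠ k : ℕ in atTop, μ (A ∩ ball x k) ≠ 0 := by
  have h_mono : Monotone fun k : ℕ => A ∩ ball x k := fun k l hkl =>
    inter_subset_inter_right A (ball_subset_ball (Nat.cast_le.mpr hkl))
  have h_lim := tendsto_measure_iUnion_atTop (μ := μ) h_mono
  rw [← inter_iUnion, iUnion_ball_nat, inter_univ] at h_lim
  exact h_lim.eventually_ne hA

theorem eq_zero_of_eventually_rpow_mul_le {L : ENNReal} {C p : ℝ} (hp : p < 2)
    (h : ∀ᶠ c : ℝ in 𝓝[>] 0, ENNReal.ofReal (c ^ p) * L ≤ ENNReal.ofReal (C * c ^ 2)) :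
    L = 0 := by
  have h_bound : ∀ᶠ c : ℝ in 𝓝[>] 0, L ≤ ENNReal.ofReal (C * c ^ (2 - p)) := by
    filter_upwards [h, self_mem_nhdsWithin] with c hc (hc_pos : 0 < c)
    have h_pow : 0 < c ^ p := Real.rpow_pos_of_pos hc_pos p
    have h_sq : c ^ 2 = c ^ p * c ^ (2 - p) := by
      rw [← Real.rpow_add hc_pos, add_sub_cancel, Real.rpow_two]
    rwa [h_sq, mul_left_comm, ENNReal.ofReal_mul h_pow.le,
      ENNReal.mul_le_mul_iff_right (ENNReal.ofReal_pos.mpr h_pow).ne' ENNReal.ofReal_ne_top] at hc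
  have h_exp : 0 < 2 - p := sub_pos.mpr hp
  have h_lim : Tendsto (fun c : ℝ => ENNReal.ofReal (C * c ^ (2 - p))) (𝓝[>] 0) (𝓝 0) := by
    have h_cont : Continuous fun c : ℝ => ENNReal.ofReal (C * c ^ (2 - p)) :=
      ENNReal.continuous_ofReal.comp (continuous_const.mul (Real.continuous_rpow_const h_exp.le))
    exact (h_cont.tendsto' 0 0 (by simp [Real.zero_rpow h_exp.ne'])).mono_left nhdsWithin_le_nhds
  exact nonpos_iff_eq_zero.mp (ge_of_tendsto h_lim h_bound)

variable {n : ℕ} {s : ℝ} {E Ω : Set (EuclideanSpace ℝ (Fin n))}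

theorem SMinimalIn.interL_vadd_sdiff_inter_ball_eq_zero (hE : SMinimalIn n s E Ω)
    (hΩ : MeasurableSet Ω) (h₀ : Ω ∈ 𝓝 0) (hEm : MeasurableSet E)
    (hcone : ∀ t : ℝ, 0 < t → t • E = E) (hns : 0 < (n : ℝ) + s) (hn : (n : ℝ) < 2 + s)
    (v : EuclideanSpace ℝ (Fin n)) (ρ : ℝ) :
    interL n s (((v +ᵥ E) \ E) ∩ ball 0 ρ) ((E \ (v +ᵥ E)) ∩ ball 0 ρ) = 0 := by
  obtain ⟨r, hr, C, hC⟩ := hE.exists_interL_vadd_sdiff_le hΩ h₀ hEm hns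
  have hvE : MeasurableSet (v +ᵥ E) := hEm.const_vadd v
  have h_smul_tendsto : Tendsto (fun c : ℝ => c • v) (𝓝[>] 0) (𝓝 0) :=
    (Continuous.tendsto' (by fun_prop) 0 0 (zero_smul ℝ v)).mono_left nhdsWithin_le_nhds
  have h_mul_tendsto : Tendsto (fun c : ℝ => c * ρ) (𝓝[>] 0) (𝓝 0) :=
    (Continuous.tendsto' (by fun_prop) 0 0 (zero_mul ρ)).mono_left nhdsWithin_le_nhds
  refine eq_zero_of_eventually_rpow_mul_le (C := C * ‖v‖ ^ 2) (sub_lt_iff_lt_add.mpr hn) ?_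
  filter_upwards [self_mem_nhdsWithin, h_smul_tendsto.eventually hC,
    h_mul_tendsto.eventually_lt_const hr] with c (hc : 0 < c) hCc hcρ
  have h_ball : c • ball (0 : EuclideanSpace ℝ (Fin n)) ρ ⊆ ball 0 r := by
    rw [_root_.smul_ball hc.ne', smul_zero, Real.norm_of_nonneg hc.le]
    exact ball_subset_ball hcρ.le
  calc ENNReal.ofReal (c ^ ((n : ℝ) - s)) *
        interL n s (((v +ᵥ E) \ E) ∩ ball 0 ρ) ((E \ (v +ᵥ E)) ∩ ball 0 ρ)
      = interL n s (c • (((v +ᵥ E) \ E) ∩ ball 0 ρ)) (c • ((E \ (v +ᵥ E)) ∩ ball 0 ρ)) :=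
        (interL_smul_smul hc ((hvE.diff hEm).inter measurableSet_ball)
          ((hEm.diff hvE).inter measurableSet_ball)).symm
    _ ≤ interL n s (((c • v +ᵥ E) \ E) ∩ ball 0 r) ((E \ (c • v +ᵥ E)) ∩ ball 0 r) := by
      simp only [smul_set_inter₀ hc.ne', smul_set_sdiff₀ hc.ne', smul_vadd_set, hcone c hc]
      exact interL_mono (inter_subset_inter_right _ h_ball) (inter_subset_inter_right _ h_ball)
    _ ≤ ENNReal.ofReal (C * ‖c • v‖ ^ 2) := hCc
    _ = ENNReal.ofReal (C * ‖v‖ ^ 2 * c ^ 2) := by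
      rw [norm_smul_of_nonneg hc.le]
      ring_nf

theorem SMinimalIn.vadd_ae_le_or_ae_le_vadd (hE : SMinimalIn n s E Ω)
    (hΩ : MeasurableSet Ω) (h₀ : Ω ∈ 𝓝 0) (hEm : MeasurableSet E)
    (hcone : ∀ t : ℝ, 0 < t → t • E = E) (hns : 0 < (n : ℝ) + s) (hn : (n : ℝ) < 2 + s)
    (v : EuclideanSpace ℝ (Fin n)) :
    (v +ᵥ E : Set _) ≤ᵐ[volume] E ∨ E ≤ᵐ[volume] (v +ᵥ E : Set _) := by
  rw [ae_le_set, ae_le_set]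
  by_contra! h_ne
  obtain ⟨k, hk_left, hk_right⟩ := ((eventually_measure_inter_ball_ne_zero h_ne.1 0).and
    (eventually_measure_inter_ball_ne_zero h_ne.2 0)).exists
  have hvE : MeasurableSet (v +ᵥ E) := hEm.const_vadd v
  rcases volume_eq_zero_or_of_interL_eq_zero ((hvE.diff hEm).inter measurableSet_ball)
    ((hEm.diff hvE).inter measurableSet_ball)
    (disjoint_sdiff_sdiff.mono inter_subset_left inter_subset_left)
    (hE.interL_vadd_sdiff_inter_ball_eq_zero hΩ h₀ hEm hcone hns hn v k) with h | h
  · exact hk_left h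
  · exact hk_right h

end BlowUp

section Cone

theorem vadd_compl_ae_le_compl {G : Type*} [AddGroup G] [MeasurableSpace G] {μ : Measure G}
    [μ.IsAddLeftInvariant] {A : Set G} {g : G} (h : (g +ᵥ A : Set G) ≤ᵐ[μ] A) :
    (-g +ᵥ Aᶜ : Set G) ≤ᵐ[μ] (Aᶜ : Set G) := by
  rw [← vadd_set_ae_le g, vadd_neg_vadd, vadd_set_compl]
  exact h.compl

theorem zero_notMem_interior_of_ne_top {V : Type*} [AddCommGroup V] [Module ℝ V]
    [TopologicalSpace V] [ContinuousSMul ℝ V] {S : ConvexCone ℝ V} (hS : S ≠ ⊤) :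
    (0 : V) ∉ interior (S : Set V) := by
  refine fun h₀ => hS (eq_top_iff.mpr fun v _ => ?_)
  have h_lim : Tendsto (fun t : ℝ => t • v) (𝓝[>] 0) (𝓝 0) :=
    (Continuous.tendsto' (by fun_prop) 0 0 (zero_smul ℝ v)).mono_left nhdsWithin_le_nhds
  obtain ⟨t, htS, ht⟩ := ((h_lim.eventually (mem_interior_iff_mem_nhds.mp h₀)).and
    self_mem_nhdsWithin).exists
  exact (S.smul_mem_iff ht).mp htS

variable {V : Type*} [NormedAddCommGroup V] [NormedSpace ℝ V] [FiniteDimensional ℝ V]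
  [MeasurableSpace V] [BorelSpace V] {μ : Measure V} [μ.IsAddHaarMeasure] {E F U : Set V}

theorem smul_set_ae_le_smul_set {c : ℝ} (hc : c ≠ 0) (h : E ≤ᵐ[μ] F) : c • E ≤ᵐ[μ] c • F := by
  rw [ae_le_set] at h ⊢
  rw [← smul_set_sdiff₀ hc, Measure.addHaar_smul, h, mul_zero]

/-- The convex cone of the vectors `v` for which the translate `v +ᵥ E` of the cone `E` is
contained in `E`, up to a null set. -/
def aeTranslationCone (μ : Measure V) [μ.IsAddHaarMeasure] (E : Set V)
    (hE : ∀ t : ℝ, 0 < t → t • E = E) : ConvexCone ℝ V where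
  carrier := {v | (v +ᵥ E : Set V) ≤ᵐ[μ] E}
  smul_mem' c hc v hv := by
    have h := smul_set_ae_le_smul_set hc.ne' hv
    rwa [smul_vadd_set, hE c hc] at h
  add_mem' v hv w hw := by
    change ((v + w) +ᵥ E : Set V) ≤ᵐ[μ] E
    rw [add_vadd]
    exact ((vadd_set_ae_le v).mpr hw).trans hv

theorem mem_aeTranslationCone {hE : ∀ t : ℝ, 0 < t → t • E = E} {v : V} :
    v ∈ aeTranslationCone μ E hE ↔ (v +ᵥ E : Set V) ≤ᵐ[μ] E :=
  Iff.rfl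

theorem mem_or_neg_mem_aeTranslationCone {hE : ∀ t : ℝ, 0 < t → t • E = E}
    (h : ∀ v : V, (v +ᵥ E : Set V) ≤ᵐ[μ] E ∨ E ≤ᵐ[μ] (v +ᵥ E : Set V)) (v : V) :
    v ∈ aeTranslationCone μ E hE ∨ -v ∈ aeTranslationCone μ E hE := by
  refine (h v).imp_right fun hv => mem_aeTranslationCone.mpr ?_
  rwa [← vadd_set_ae_le v, vadd_neg_vadd]

theorem ae_ae_add_mem_of_forall_vadd_ae_le (hU : MeasurableSet U) (hE : MeasurableSet E)
    (h : ∀ v ∈ U, (v +ᵥ E : Set V) ≤ᵐ[μ] E) :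
    ∀ᵐ y ∂μ, ∀ᵐ v ∂μ, v ∈ U → y ∈ E → v + y ∈ E := by
  have h_meas : MeasurableSet {z : V × V | z.1 ∈ U → z.2 ∈ E → z.1 + z.2 ∈ E} := by
    have h_bad : MeasurableSet {z : V × V | z.1 ∈ U ∧ z.2 ∈ E ∧ z.1 + z.2 ∉ E} :=
      (measurable_fst hU).inter ((measurable_snd hE).inter (measurable_add hE).compl)
    convert h_bad.compl using 1
    ext z
    simp
  refine (Measure.ae_ae_comm h_meas).mp (ae_of_all _ fun v => ?_)
  by_cases hv : v ∈ U
  · filter_upwards [(measurePreserving_add_left μ v).quasiMeasurePreserving.ae (h v hv)]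
      with y hy _ hyE
    exact hy (vadd_mem_vadd_set hyE)
  · simp [hv]

-- For almost every `y ∈ E`, the translate `U + y` is contained in `E` up to a null set; the same
-- holds for the points `y / (k + 1)` of the cone, which tend to `0`.
theorem ae_le_of_isOpen_of_forall_vadd_ae_le (hU : IsOpen U) (hEm : MeasurableSet E)
    (hE : ∀ t : ℝ, 0 < t → t • E = E) (hμE : μ E ≠ 0)
    (h : ∀ v ∈ U, (v +ᵥ E : Set V) ≤ᵐ[μ] E) : U ≤ᵐ[μ] E := by
  have h_scale : ∀ᵐ y ∂μ, ∀ k : ℕ, ∀ᵐ v ∂μ,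
      v ∈ U → ((k : ℝ) + 1)⁻¹ • y ∈ E → v + ((k : ℝ) + 1)⁻¹ • y ∈ E :=
    ae_all_iff.mpr fun k =>
      (Measure.quasiMeasurePreserving_smul μ (by positivity : ((k : ℝ) + 1)⁻¹ ≠ 0)).ae
        (ae_ae_add_mem_of_forall_vadd_ae_le hU.measurableSet hEm h)
  obtain ⟨y, hyE, hy⟩ := ((frequently_ae_mem_iff.mpr hμE).and_eventually h_scale).exists
  have h_sub : ∀ᵐ x ∂μ, ∀ k : ℕ, x - ((k : ℝ) + 1)⁻¹ • y ∈ U → x ∈ E := by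
    refine ae_all_iff.mpr fun k => ?_
    filter_upwards [(measurePreserving_sub_right μ (((k : ℝ) + 1)⁻¹ • y)).quasiMeasurePreserving.ae
      (hy k)] with x hx hxU
    have hyE' : ((k : ℝ) + 1)⁻¹ • y ∈ E := by
      have h_smul := smul_mem_smul_set (a := ((k : ℝ) + 1)⁻¹) hyE
      rwa [hE _ (by positivity)] at h_smul
    simpa using hx hxU hyE'
  filter_upwards [h_sub] with x hx (hxU : x ∈ U)
  have h_lim : Tendsto (fun k : ℕ => x - ((k : ℝ) + 1)⁻¹ • y) atTop (𝓝 x) := by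
    simpa [one_div] using
      tendsto_const_nhds.sub
        ((tendsto_one_div_add_atTop_nhds_zero_nat (𝕜 := ℝ)).smul_const y)
  obtain ⟨k, hk⟩ := (h_lim.eventually (hU.mem_nhds hxU)).exists
  exact hx k hk

theorem ae_eq_aeTranslationCone (hEm : MeasurableSet E) (hE : ∀ t : ℝ, 0 < t → t • E = E)
    (hμE : μ E ≠ 0) (hμE' : μ Eᶜ ≠ 0)
    (h : ∀ v : V, (v +ᵥ E : Set V) ≤ᵐ[μ] E ∨ E ≤ᵐ[μ] (v +ᵥ E : Set V)) :
    E =ᵐ[μ] (aeTranslationCone μ E hE : Set V) := by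
  set S := aeTranslationCone μ E hE
  have h_frontier (A : Set V) (hA : Convex ℝ A) : interior A =ᵐ[μ] A :=
    interior_ae_eq_of_null_frontier (hA.addHaar_frontier μ)
  have h_sub : (S : Set V) ≤ᵐ[μ] E :=
    (h_frontier S S.convex).symm.le.trans
      (ae_le_of_isOpen_of_forall_vadd_ae_le isOpen_interior hEm hE hμE fun v hv =>
        mem_aeTranslationCone.mp (interior_subset hv))
  have hE_compl : ∀ t : ℝ, 0 < t → t • Eᶜ = Eᶜ := fun t ht => by
    rw [← image_smul, image_compl_eq (MulAction.bijective₀ ht.ne'), image_smul, hE t ht]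
  have h_sub_neg : (-S : Set V) ≤ᵐ[μ] (Eᶜ : Set V) :=
    (h_frontier _ S.convex.neg).symm.le.trans
      (ae_le_of_isOpen_of_forall_vadd_ae_le isOpen_interior hEm.compl hE_compl hμE' fun v hv => by
        have h_mem : -v ∈ S := interior_subset (s := (-S : Set V)) hv
        simpa using vadd_compl_ae_le_compl (mem_aeTranslationCone.mp h_mem))
  refine EventuallyLE.antisymm ?_ h_sub
  filter_upwards [h_sub_neg] with x hx hxE
  exact (mem_or_neg_mem_aeTranslationCone h x).resolve_right fun hxS => hx hxS hxE

theorem exists_ae_eq_setOf_pos_of_mem_or_neg_mem {S : ConvexCone ℝ V} (hS : S ≠ ⊤)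
    (h : ∀ v, v ∈ S ∨ -v ∈ S) :
    ∃ f : StrongDual ℝ V, f ≠ 0 ∧ (S : Set V) =ᵐ[μ] {x | 0 < f x} := by
  obtain ⟨f, hf⟩ := geometric_hahn_banach_point_open S.convex.interior isOpen_interior
    (zero_notMem_interior_of_ne_top hS)
  have h_pos : ∀ᵐ x ∂μ, x ∈ S → 0 < f x := by
    have h_interior : interior (S : Set V) =ᵐ[μ] (S : Set V) :=
      interior_ae_eq_of_null_frontier (S.convex.addHaar_frontier μ)
    filter_upwards [h_interior.mem_iff] with x hx hxS
    simpa using hf x (hx.mpr hxS)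
  have h_neg : ∀ᵐ x ∂μ, -x ∈ S → f x < 0 := by
    filter_upwards [(Measure.measurePreserving_neg μ).quasiMeasurePreserving.ae h_pos] with x hx hxS
    simpa using hx hxS
  refine ⟨f, ?_, ?_⟩
  · rintro rfl
    obtain ⟨x, hx_pos, hx_neg⟩ := (h_pos.and h_neg).exists
    simpa using (h x).imp hx_pos hx_neg
  · refine eventuallyEq_set.mpr ?_
    filter_upwards [h_pos, h_neg] with x hx_pos hx_neg
    exact ⟨hx_pos, fun hx => (h x).resolve_right fun hxS => (hx_neg hxS).not_gt hx⟩

theorem exists_norm_eq_one_setOf_pos_eq {V : Type*} [NormedAddCommGroup V] [InnerProductSpace ℝ V]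
    [CompleteSpace V] {f : StrongDual ℝ V} (hf : f ≠ 0) :
    ∃ ν : V, ‖ν‖ = 1 ∧ {x | 0 < f x} = {x | 0 < ⟪x, ν⟫} := by
  obtain ⟨w, rfl⟩ := (InnerProductSpace.toDual ℝ V).surjective f
  have hw : 0 < ‖w‖ := norm_pos_iff.mpr fun h => hf (by simp [h])
  refine ⟨‖w‖⁻¹ • w, norm_smul_inv_norm (𝕜 := ℝ) (norm_pos_iff.mp hw), Set.ext fun x => ?_⟩
  simp [real_inner_smul_right, real_inner_comm x w, hw]

end Cone

theorem stmt_19_general {n : ℕ} {s : ℝ} (hs : 0 < s) (hn : (n : ℝ) < 2 + s)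
    {E Ω : Set (EuclideanSpace ℝ (Fin n))} (hΩ : MeasurableSet Ω) (h₀ : Ω ∈ 𝓝 0)
    (hE : MeasurableSet E) (hcone : ∀ t : ℝ, 0 < t → t • E = E) (hmin : SMinimalIn n s E Ω)
    (hne : volume E ≠ 0) (hne' : volume Eᶜ ≠ 0) :
    ∃ ν : EuclideanSpace ℝ (Fin n), ‖ν‖ = 1 ∧
      E =ᵐ[volume] {x : EuclideanSpace ℝ (Fin n) | 0 < ⟪x, ν⟫} := by
  have h_comparable (v : EuclideanSpace ℝ (Fin n)) :
      (v +ᵥ E : Set _) ≤ᵐ[volume] E ∨ E ≤ᵐ[volume] (v +ᵥ E : Set _) :=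
    hmin.vadd_ae_le_or_ae_le_vadd hΩ h₀ hE hcone (by positivity) hn v
  have h_cone := ae_eq_aeTranslationCone hE hcone hne hne' h_comparable
  have h_top : aeTranslationCone volume E hcone ≠ ⊤ := fun h => hne' <| by
    simpa [h, ae_eq_univ] using h_cone
  obtain ⟨f, hf, hf_cone⟩ := exists_ae_eq_setOf_pos_of_mem_or_neg_mem (μ := volume) h_top
    (mem_or_neg_mem_aeTranslationCone h_comparable)
  obtain ⟨ν, hν, hfν⟩ := exists_norm_eq_one_setOf_pos_eq hf
  exact ⟨ν, hν, hfν ▸ h_cone.trans hf_cone⟩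

/-- Theorem 1.1: a nontrivial `s`-minimal cone in `ℝ²` is a half-plane
`{x : ⟪x, ν⟫ > 0}` (up to a set of measure zero). -/
theorem stmt_19 (s : ℝ) (hs : s ∈ Set.Ioo (0 : ℝ) 1)
    (E : Set (EuclideanSpace ℝ (Fin 2))) (hE : MeasurableSet E)
    (hcone : ∀ t : ℝ, 0 < t → (fun x => t • x) '' E = E)
    (hmin : ∀ R : ℝ, 0 < R → SMinimalIn 2 s E (Metric.ball 0 R))
    (hne : volume E ≠ 0) (hne' : volume Eᶜ ≠ 0) :
    ∃ ν : EuclideanSpace ℝ (Fin 2), ‖ν‖ = 1 ∧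
      E =ᵐ[volume] {x : EuclideanSpace ℝ (Fin 2) | 0 < ⟪x, ν⟫} :=
  stmt_19_general hs.1 (by simpa using hs.1) measurableSet_ball (ball_mem_nhds 0 one_pos) hE hcone
    (hmin 1 one_pos) hne hne'
end
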